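/- arXiv:2305.07757 — 2 statements merged into one kernel-verified Lean document; each statement's English description precedes it below -/
import Mathlib

section
/- Let P = c_P z₁^{α₁}z₂^{α₂}z₃^{α₃}, Q = c_Q z₁^{β₁}z₂^{β₂}z₃^{β₃}, R = c_R z₁^{γ₁}z₂^{γ₂}z₃^{γ₃} be monomials with nonzero coefficients c_P, c_Q, c_R ∈ ℂ, with deg P + deg Q = 2·deg R, deg R ≥ 2, and det[[α₁,β₁,γ₁],[α₂,β₂,γ₂],[α₃,β₃,γ₃]] ≠ 0 (holomorphic nondegeneracy). If dim_ℝ g_c > 0, then 7 ≤ dim_ℝ g ≤ 13. Furthermore, there exists such a choice of monomials P, Q, R (with nonzero coefficients, deg P + deg Q = 2·deg R, deg R ≥ 2 and nonzero exponent determinant) for which dim_ℝ g_c > 0 and dim_ℝ g = 13. -/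
open MvPolynomial Complex

noncomputable section

/-- `Φ(z) = P(z)·conj(Q(z)) + Q(z)·conj(P(z)) + R(z)·conj(R(z))`, so that the model
hypersurface is `M = {(z,w) : Im w = Φ(z)}`. -/
def Phi (P Q R : MvPolynomial (Fin 3) ℂ) (z : Fin 3 → ℂ) : ℂ :=
  eval z P * (starRingEnd ℂ) (eval z Q) + eval z Q * (starRingEnd ℂ) (eval z P) +
    eval z R * (starRingEnd ℂ) (eval z R)

/-- `Φ_j(z) = (∂P/∂z_j)(z)·conj(Q(z)) + (∂Q/∂z_j)(z)·conj(P(z)) + (∂R/∂z_j)(z)·conj(R(z))`. -/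
def PhiD (P Q R : MvPolynomial (Fin 3) ℂ) (j : Fin 3) (z : Fin 3 → ℂ) : ℂ :=
  eval z (pderiv j P) * (starRingEnd ℂ) (eval z Q) +
    eval z (pderiv j Q) * (starRingEnd ℂ) (eval z P) +
    eval z (pderiv j R) * (starRingEnd ℂ) (eval z R)

/-- The monomial `c·z₁^{e₁} z₂^{e₂} z₃^{e₃}`. -/
def mon (c : ℂ) (e : Fin 3 → ℕ) : MvPolynomial (Fin 3) ℂ :=
  C c * X 0 ^ e 0 * X 1 ^ e 1 * X 2 ^ e 2

/-- Total degree of the exponent vector `e`. -/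
def degE (e : Fin 3 → ℕ) : ℕ := e 0 + e 1 + e 2

/-- The determinant of the 3×3 matrix whose columns are the exponent vectors
`a`, `b`, `g` of the three monomials. -/
def edet (a b g : Fin 3 → ℕ) : ℤ :=
  Matrix.det !![(a 0 : ℤ), (b 0 : ℤ), (g 0 : ℤ);
                (a 1 : ℤ), (b 1 : ℤ), (g 1 : ℤ);
                (a 2 : ℤ), (b 2 : ℤ), (g 2 : ℤ)]

/-- The polynomial vector field `Σ F_j ∂/∂z_j + G ∂/∂w` is an infinitesimal CR
automorphism of `M = {Im w = Φ(z)}`. -/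
def IsInfCR (P Q R : MvPolynomial (Fin 3) ℂ)
    (F : Fin 3 → MvPolynomial (Fin 4) ℂ) (G : MvPolynomial (Fin 4) ℂ) : Prop :=
  ∀ (z : Fin 3 → ℂ) (u : ℝ),
    (eval (Fin.snoc z ((u : ℂ) + Complex.I * Phi P Q R z)) G / (2 * Complex.I) -
      ∑ j, eval (Fin.snoc z ((u : ℂ) + Complex.I * Phi P Q R z)) (F j) * PhiD P Q R j z).re = 0

/-- `g_c`: rigid infinitesimal CR automorphisms `Σ f_j(z) ∂/∂z_j` of `M` all of
whose monomials have total degree at least `2` and at most `d`. -/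
def gcSet (P Q R : MvPolynomial (Fin 3) ℂ) (d : ℕ) : Set (Fin 3 → MvPolynomial (Fin 3) ℂ) :=
  {f | (∀ j, ∀ m ∈ (f j).support, 2 ≤ (m.sum fun _ e => e) ∧ (m.sum fun _ e => e) ≤ d) ∧
       ∀ z : Fin 3 → ℂ, (∑ j, eval z (f j) * PhiD P Q R j z).re = 0}

/-- `g`: the real vector space (here, the set) of all polynomial infinitesimal CR
automorphisms of `M`. -/
def gSet (P Q R : MvPolynomial (Fin 3) ℂ) :
    Set ((Fin 3 → MvPolynomial (Fin 4) ℂ) × MvPolynomial (Fin 4) ℂ) :=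
  {Xf | IsInfCR P Q R Xf.1 Xf.2}

/-! Polarization turns the equation of an infinitesimal automorphism into an identity in independent
points `(z, w)` and `(ζ, τ)` of a complex quadric. Since the exponent determinant is nonzero, the
map `(z, w) ↦ (P z, Q z, R z, w)` covers the torus, so this identity descends to an infinitesimal
automorphism of the hyperquadric `w - τ = c (X · η)`. Replacing `(X, η)` by `(s X, s⁻¹ η)` and
comparing Laurent coefficients in `s` brings it into the classical quadratic normal form.

Automorphisms of `M` are thus the normal forms that lift through the monomial map. When
`deg P ≠ deg Q`, comparing degrees leaves at most 13 real parameters. A nonzero element of `g_c`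
forces `deg P ≠ deg Q` and is independent of the 6-dimensional space of liftable normal forms with
diagonal linear part, whence the lower bound 7. For `z₁`, `z₂² z₃`, `z₂ z₃` all 13 parameters
lift. -/

open Matrix

section PolynomialFunctions

/-- `f` is a polynomial function on the affine space `σ → K`. Identities between such functions are
checked on Zariski dense sets. -/
@[fun_prop]
def IsPolyFun {σ K : Type*} [CommSemiring K] (f : (σ → K) → K) : Prop :=
  ∃ p : MvPolynomial σ K, ∀ v, f v = eval v p

namespace IsPolyFun

variable {σ K : Type*} [CommSemiring K] {f g : (σ → K) → K}

@[fun_prop]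
theorem const (a : K) : IsPolyFun (fun _ : σ → K => a) := ⟨C a, by simp⟩

@[fun_prop]
theorem coord (i : σ) : IsPolyFun (fun v : σ → K => v i) := ⟨X i, by simp⟩

@[fun_prop]
theorem add (hf : IsPolyFun f) (hg : IsPolyFun g) : IsPolyFun (fun v => f v + g v) := by
  obtain ⟨p, hp⟩ := hf
  obtain ⟨q, hq⟩ := hg
  exact ⟨p + q, fun v => by simp [hp, hq]⟩

@[fun_prop]
theorem mul (hf : IsPolyFun f) (hg : IsPolyFun g) : IsPolyFun (fun v => f v * g v) := by
  obtain ⟨p, hp⟩ := hf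
  obtain ⟨q, hq⟩ := hg
  exact ⟨p * q, fun v => by simp [hp, hq]⟩

theorem sum {ι : Type*} {s : Finset ι} {f : ι → (σ → K) → K} (hf : ∀ i, IsPolyFun (f i)) :
    IsPolyFun (fun v => ∑ i ∈ s, f i v) := by
  choose p hp using hf
  exact ⟨∑ i ∈ s, p i, fun v => by simp [hp]⟩

@[fun_prop]
theorem dotProduct {ι : Type*} [Fintype ι] {a b : (σ → K) → ι → K}
    (ha : ∀ i, IsPolyFun (fun v => a v i)) (hb : ∀ i, IsPolyFun (fun v => b v i)) :
    IsPolyFun (fun v => a v ⬝ᵥ b v) :=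
  sum fun i => (ha i).mul (hb i)

theorem comp {ι : Type*} {f : (ι → K) → K} (hf : IsPolyFun f) {a : (σ → K) → ι → K}
    (ha : ∀ i, IsPolyFun (fun v => a v i)) : IsPolyFun (fun v => f (a v)) := by
  obtain ⟨p, hp⟩ := hf
  choose q hq using ha
  refine ⟨bind₁ q p, fun v => ?_⟩
  have hv : a v = fun i => MvPolynomial.eval v (q i) := funext (hq · v)
  simp only [hp, hv]
  exact (eval₂Hom_bind₁ _ _ _ _).symm

@[fun_prop]
theorem eval {ι : Type*} (p : MvPolynomial ι K) {a : (σ → K) → ι → K}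
    (ha : ∀ i, IsPolyFun (fun v => a v i)) : IsPolyFun (fun v => MvPolynomial.eval (a v) p) :=
  comp ⟨p, fun _ => rfl⟩ ha

variable {K : Type*} [CommRing K] {f g : (σ → K) → K}

@[fun_prop]
theorem sub (hf : IsPolyFun f) (hg : IsPolyFun g) : IsPolyFun (fun v => f v - g v) := by
  obtain ⟨p, hp⟩ := hf
  obtain ⟨q, hq⟩ := hg
  exact ⟨p - q, fun v => by simp [hp, hq]⟩

theorem eq_zero_of_mem_pi [IsDomain K] (hf : IsPolyFun f) {s : σ → Set K}
    (hs : ∀ i, (s i).Infinite) (h : ∀ v ∈ Set.univ.pi s, f v = 0) (v : σ → K) : f v = 0 := by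
  obtain ⟨p, hp⟩ := hf
  have hp0 : p = 0 := funext_set s hs fun u hu => by rw [← hp u, h u hu, map_zero]
  rw [hp, hp0, map_zero]

theorem eq_of_ne_zero [IsDomain K] [Infinite K] (hf : IsPolyFun f) (hg : IsPolyFun g)
    (h : ∀ v, (∀ i, v i ≠ 0) → f v = g v) (v : σ → K) : f v = g v :=
  sub_eq_zero.mp <| (hf.sub hg).eq_zero_of_mem_pi
    (fun _ => (Set.finite_singleton (0 : K)).infinite_compl)
    (fun v hv => sub_eq_zero.mpr (h v fun i => hv i trivial)) v

end IsPolyFun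

/-- In the coordinates `(z + ζ) / 2` and `(z - ζ) / (2 * I)`, the points with `ζ = conj z` are the
real points. -/
theorem IsPolyFun.eq_zero_of_conj {ι : Type*} {f : (ι ⊕ ι → ℂ) → ℂ} (hf : IsPolyFun f)
    (h : ∀ z : ι → ℂ, f (Sum.elim z (star z)) = 0) (z ζ : ι → ℂ) : f (Sum.elim z ζ) = 0 := by
  let coords (v : ι ⊕ ι → ℂ) : ι ⊕ ι → ℂ :=
    Sum.elim (fun i => v (.inl i) + I * v (.inr i)) (fun i => v (.inl i) - I * v (.inr i))
  have hcoords : IsPolyFun fun v => f (coords v) := by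
    refine hf.comp ?_
    rintro (i | i) <;> simp only [coords, Sum.elim_inl, Sum.elim_inr] <;> fun_prop
  have hreal : ∀ v ∈ Set.univ.pi fun _ => Set.range ofReal, f (coords v) = 0 := by
    intro v hv
    choose r hr using fun i => hv i trivial
    rw [← h fun i => r (.inl i) + I * r (.inr i)]
    congr 1
    ext (i | i) <;> simp [coords, ← hr, sub_eq_add_neg]
  have hzζ : coords (Sum.elim (fun i => (z i + ζ i) / 2) fun i => (z i - ζ i) / (2 * I)) =
      Sum.elim z ζ := by
    ext (i | i) <;> simp only [coords, Sum.elim_inl, Sum.elim_inr] <;> field_simp <;> ring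
  rw [← hzζ]
  exact hcoords.eq_zero_of_mem_pi
    (fun _ => Set.infinite_range_of_injective ofReal_injective) hreal _

end PolynomialFunctions

section PolarPairs

variable {K : Type*} {m n : ℕ}

/-- The point `(z, w)` of the affine space of dimension `n + 1`. -/
def pt (z : Fin n → K) (w : K) : Fin (n + 1) → K := Fin.snoc z w

@[simp]
theorem pt_castSucc (z : Fin n → K) (w : K) (i : Fin n) : pt z w i.castSucc = z i :=
  Fin.snoc_castSucc (α := fun _ => K) ..

@[simp]
theorem pt_last (z : Fin n → K) (w : K) : pt z w (Fin.last n) = w :=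
  Fin.snoc_last (α := fun _ => K) ..

variable [CommRing K]

@[fun_prop]
theorem IsPolyFun.pt_apply {σ : Type*} {a : (σ → K) → Fin n → K} {b : (σ → K) → K}
    (ha : ∀ i, IsPolyFun (fun v => a v i)) (hb : IsPolyFun b) (i : Fin (n + 1)) :
    IsPolyFun (fun v => pt (a v) (b v) i) := by
  induction i using Fin.lastCases with
  | last => simpa only [pt_last]
  | cast i => simpa only [pt_castSucc] using ha i

theorem exists_eval_pt_eq {f : (Fin n → K) → K → K}
    (hf : IsPolyFun fun v : Fin (n + 1) → K => f (fun i => v i.castSucc) (v (Fin.last n))) :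
    ∃ p : MvPolynomial (Fin (n + 1)) K, ∀ X w, f X w = eval (pt X w) p := by
  obtain ⟨p, hp⟩ := hf
  exact ⟨p, fun X w => by simpa using hp (pt X w)⟩

/-- The polynomial map with components `x`. -/
def evalVec {ι σ : Type*} (x : ι → MvPolynomial σ K) (z : σ → K) : ι → K := fun i => eval z (x i)

theorem evalVec_X {σ : Type*} (z : σ → K) : evalVec X z = z := funext fun _ => eval_X _

/-- The Jacobian matrix of the polynomial map `x`. -/
def jacobian {ι σ : Type*} (x : ι → MvPolynomial σ K) (z : σ → K) : Matrix ι σ K :=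
  of fun i j => eval z (pderiv j (x i))

theorem jacobian_X {σ : Type*} [DecidableEq σ] (z : σ → K) : jacobian X z = 1 := by
  ext i j
  simp [jacobian, pderiv_X, one_apply, Pi.single_apply, apply_ite (eval z)]

/-- The push-forward by the map `x` of the vector field `∑ j, F j ∂/∂z_j`, whose coefficients
depend polynomially on a parameter `w`. -/
def push {ι : Type*} (x : ι → MvPolynomial (Fin m) K) (F : Fin m → MvPolynomial (Fin (m + 1)) K)
    (z : Fin m → K) (w : K) : ι → K :=
  jacobian x z *ᵥ evalVec F (pt z w)

theorem push_X (h : Fin n → MvPolynomial (Fin (n + 1)) K) (z : Fin n → K) (w : K) :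
    push X h z w = evalVec h (pt z w) := by
  rw [push, jacobian_X, one_mulVec]

/-- The infinitesimal automorphism equation of `w - τ = c * (x z ⬝ᵥ y ζ)`, in the independent
variables `(z, w)` and `(ζ, τ)`, for the pair of holomorphic vector fields `(F, G)` and
`(F', G')`. For `c = 2 * I` this is the polarization of the equation `Im w = x z ⬝ᵥ y (conj z)`. -/
def IsPolarPair (c : K) (x y : Fin n → MvPolynomial (Fin m) K)
    (F F' : Fin m → MvPolynomial (Fin (m + 1)) K) (G G' : MvPolynomial (Fin (m + 1)) K) : Prop :=
  ∀ z ζ w τ, w - τ = c * (evalVec x z ⬝ᵥ evalVec y ζ) →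
    eval (pt z w) G - eval (pt ζ τ) G' =
      c * (push x F z w ⬝ᵥ evalVec y ζ + push y F' ζ τ ⬝ᵥ evalVec x z)

theorem IsPolarPair.symm {c : K} {x y : Fin n → MvPolynomial (Fin m) K}
    {F F' : Fin m → MvPolynomial (Fin (m + 1)) K} {G G' : MvPolynomial (Fin (m + 1)) K}
    (H : IsPolarPair c x y F F' G G') : IsPolarPair (-c) y x F' F G' G := by
  intro ζ z τ w h
  have hw : w - τ = c * (evalVec x z ⬝ᵥ evalVec y ζ) := by
    linear_combination -h + c * dotProduct_comm (evalVec y ζ) (evalVec x z)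
  linear_combination -H z ζ w τ hw

theorem isPolarPair_X_iff {c : K} {h h' : Fin n → MvPolynomial (Fin (n + 1)) K}
    {g g' : MvPolynomial (Fin (n + 1)) K} :
    IsPolarPair c X X h h' g g' ↔ ∀ (x η : Fin n → K) (w τ : K), w - τ = c * (x ⬝ᵥ η) →
      eval (pt x w) g - eval (pt η τ) g' =
        c * (evalVec h (pt x w) ⬝ᵥ η + evalVec h' (pt η τ) ⬝ᵥ x) := by
  simp only [IsPolarPair, push_X, evalVec_X]

/-- Every point of the torus `∀ i, X i ≠ 0` is a value of the polynomial map `x`. -/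
def CoversTorus (x : Fin n → MvPolynomial (Fin m) K) : Prop :=
  ∀ X : Fin n → K, (∀ i, X i ≠ 0) → ∃ z, evalVec x z = X

theorem eq_of_coversTorus [IsDomain K] [Infinite K] {x : Fin n → MvPolynomial (Fin m) K}
    (hx : CoversTorus x) {f g : (Fin n → K) → K} (hf : IsPolyFun f) (hg : IsPolyFun g)
    (h : ∀ z, f (evalVec x z) = g (evalVec x z)) (X : Fin n → K) : f X = g X := by
  refine hf.eq_of_ne_zero hg (fun X hX => ?_) X
  obtain ⟨z, rfl⟩ := hx X hX
  exact h z

section Descent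

variable {K : Type*} [Field K] {c : K} {x y : Fin n → MvPolynomial (Fin m) K}
  {F F' : Fin m → MvPolynomial (Fin (m + 1)) K} {G G' : MvPolynomial (Fin (m + 1)) K}

theorem IsPolarPair.exists_eval_eq (H : IsPolarPair c x y F F' G G') (hy : evalVec y 0 = 0) :
    ∃ g : MvPolynomial (Fin (n + 1)) K, ∀ z w, eval (pt z w) G = eval (pt (evalVec x z) w) g := by
  have hg : IsPolyFun fun v : Fin (n + 1) → K => eval (pt 0 (v (Fin.last n))) G' +
      c * (push y F' 0 (v (Fin.last n)) ⬝ᵥ fun i => v i.castSucc) := by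
    unfold push mulVec evalVec
    fun_prop
  obtain ⟨g, hg⟩ := exists_eval_pt_eq
    (f := fun X w => eval (pt 0 w) G' + c * (push y F' 0 w ⬝ᵥ X)) hg
  refine ⟨g, fun z w => ?_⟩
  have h := H z 0 w w (by simp [hy])
  rw [hy, dotProduct_zero, zero_add] at h
  rw [← hg]
  linear_combination h

theorem IsPolarPair.exists_push_dotProduct_eq (H : IsPolarPair c x y F F' G G') (hc : c ≠ 0)
    (hy0 : evalVec y 0 = 0) (ζ : Fin m → K) :
    ∃ q : MvPolynomial (Fin (n + 1)) K, ∀ z w,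
      push x F z w ⬝ᵥ evalVec y ζ = eval (pt (evalVec x z) w) q := by
  obtain ⟨g, hg⟩ := H.exists_eval_eq hy0
  let f (X : Fin n → K) (w : K) : K :=
    c⁻¹ * (eval (pt X w) g - eval (pt ζ (w - c * (X ⬝ᵥ evalVec y ζ))) G') -
      push y F' ζ (w - c * (X ⬝ᵥ evalVec y ζ)) ⬝ᵥ X
  obtain ⟨q, hq⟩ := exists_eval_pt_eq (f := f) <| by
    unfold f push mulVec evalVec
    fun_prop
  refine ⟨q, fun z w => ?_⟩
  have h := H z ζ w (w - c * (evalVec x z ⬝ᵥ evalVec y ζ)) (by ring)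
  rw [← hq]
  simp only [f, ← hg, h]
  field_simp
  ring

theorem IsPolarPair.exists_push_eq [Infinite K] (H : IsPolarPair c x y F F' G G') (hc : c ≠ 0)
    (hy : CoversTorus y) (hy0 : evalVec y 0 = 0) :
    ∃ h : Fin n → MvPolynomial (Fin (n + 1)) K, ∀ z w,
      push x F z w = evalVec h (pt (evalVec x z) w) := by
  classical
  obtain ⟨t, ht⟩ := Infinite.exists_notMem_finset ({0, 1} : Finset K)
  obtain ⟨ht0, ht1⟩ : t ≠ 0 ∧ t ≠ 1 := by simpa using ht
  obtain ⟨ζ₁, hζ₁⟩ := hy 1 fun _ => one_ne_zero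
  obtain ⟨q₁, hq₁⟩ := H.exists_push_dotProduct_eq hc hy0 ζ₁
  have hcomp (i : Fin n) : ∃ p : MvPolynomial (Fin (n + 1)) K, ∀ z w,
      push x F z w i = eval (pt (evalVec x z) w) p := by
    obtain ⟨ζ, hζ⟩ := hy (1 + Pi.single i (t - 1)) fun j => by
      by_cases hj : j = i <;> simp [hj, ht0]
    obtain ⟨q, hq⟩ := H.exists_push_dotProduct_eq hc hy0 ζ
    refine ⟨C (t - 1)⁻¹ * (q - q₁), fun z w => ?_⟩
    simp only [map_mul, map_sub, eval_C, ← hq, ← hq₁, hζ, hζ₁, dotProduct_add, dotProduct_single]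
    field_simp [sub_ne_zero.mpr ht1]
    ring
  choose h hh using hcomp
  exact ⟨h, fun z w => funext fun i => hh i z w⟩

theorem IsPolarPair.descend [Infinite K] (H : IsPolarPair c x y F F' G G')
    (hx : CoversTorus x) (hy : CoversTorus y)
    {h h' : Fin n → MvPolynomial (Fin (n + 1)) K} {g g' : MvPolynomial (Fin (n + 1)) K}
    (hh : ∀ z w, push x F z w = evalVec h (pt (evalVec x z) w))
    (hh' : ∀ z w, push y F' z w = evalVec h' (pt (evalVec y z) w))
    (hg : ∀ z w, eval (pt z w) G = eval (pt (evalVec x z) w) g)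
    (hg' : ∀ z w, eval (pt z w) G' = eval (pt (evalVec y z) w) g') :
    IsPolarPair c X X h h' g g' := by
  let X (v : (Fin n ⊕ Fin n) ⊕ Unit → K) (i : Fin n) : K := v (.inl (.inl i))
  let η (v : (Fin n ⊕ Fin n) ⊕ Unit → K) (i : Fin n) : K := v (.inl (.inr i))
  let τ (v : (Fin n ⊕ Fin n) ⊕ Unit → K) : K := v (.inr ())
  let w (v : (Fin n ⊕ Fin n) ⊕ Unit → K) : K := τ v + c * (X v ⬝ᵥ η v)
  have hl : IsPolyFun fun v => eval (pt (X v) (w v)) g - eval (pt (η v) (τ v)) g' := by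
    unfold w X η τ
    fun_prop
  have hr : IsPolyFun fun v =>
      c * (evalVec h (pt (X v) (w v)) ⬝ᵥ η v + evalVec h' (pt (η v) (τ v)) ⬝ᵥ X v) := by
    unfold w X η τ evalVec
    fun_prop
  have hlr := hl.eq_of_ne_zero hr fun v hv => by
    obtain ⟨z, hz⟩ := hx (X v) fun _ => hv _
    obtain ⟨ζ, hζ⟩ := hy (η v) fun _ => hv _
    simp only [w, ← hz, ← hζ, ← hg, ← hg', ← hh, ← hh']
    exact H z ζ _ _ (by ring)
  rw [isPolarPair_X_iff]
  intro X₀ η₀ w₀ τ₀ hw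
  obtain rfl : w₀ = τ₀ + c * (X₀ ⬝ᵥ η₀) := by linear_combination hw
  exact hlr (Sum.elim (Sum.elim X₀ η₀) fun _ => τ₀)

end Descent
end PolarPairs

section LinePolynomial

variable {K σ : Type*} [CommRing K]

/-- The restriction of the polynomial `p` to the parametrized line `a + s • b`, as a polynomial in
`s`. -/
def linePoly (a b : σ → K) (p : MvPolynomial σ K) : Polynomial K :=
  aeval (fun i => .C (a i) + .C (b i) * .X) p

theorem eval_linePoly (a b : σ → K) (p : MvPolynomial σ K) (s : K) :
    (linePoly a b p).eval s = eval (a + s • b) p := by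
  rw [linePoly, ← Polynomial.coe_aeval_eq_eval, comp_aeval_apply, aeval_eq_eval]
  congr 2
  ext i
  simp only [map_add, map_mul, Polynomial.aeval_C, Polynomial.aeval_X, Pi.add_apply, Pi.smul_apply,
    smul_eq_mul, Algebra.algebraMap_self, RingHom.id_apply, mul_comm s]

theorem coeff_zero_linePoly (a b : σ → K) (p : MvPolynomial σ K) :
    (linePoly a b p).coeff 0 = eval a p := by
  rw [Polynomial.coeff_zero_eq_eval_zero, eval_linePoly, zero_smul, add_zero]

theorem coeff_one_linePoly [Fintype σ] (a b : σ → K) (p : MvPolynomial σ K) :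
    (linePoly a b p).coeff 1 = ∑ i, eval a (pderiv i p) * b i := by
  classical
  induction p using MvPolynomial.induction_on with
  | C k => simp [linePoly, Polynomial.algebraMap_eq]
  | add p q hp hq =>
    simp only [linePoly, map_add, Polynomial.coeff_add, add_mul, Finset.sum_add_distrib] at *
    rw [hp, hq]
  | mul_X p i hp =>
    have h0 := coeff_zero_linePoly a b p
    simp only [linePoly] at hp h0
    simp only [linePoly, map_mul, aeval_X, mul_add, Polynomial.coeff_add, Polynomial.coeff_mul_C,
      ← mul_assoc, Polynomial.coeff_mul_X, hp, h0, pderiv_mul, map_add, eval_X, pderiv_X, add_mul,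
      Finset.sum_add_distrib, Finset.sum_mul, Pi.single_apply]
    congr 1
    · exact Finset.sum_congr rfl fun j _ => by ring
    · simp [apply_ite (eval a)]

end LinePolynomial

section LaurentIdentities

variable {K : Type*} [Field K] [Infinite K]

theorem natDegree_eq_zero_of_eval_eq_eval_inv {f g : Polynomial K}
    (h : ∀ s ≠ 0, f.eval s = g.eval s⁻¹) : f.natDegree = 0 := by
  have hmul : f * .X ^ g.natDegree = g.reverse := by
    refine Polynomial.eq_of_infinite_eval_eq _ _
      ((Set.finite_singleton (0 : K)).infinite_compl.mono fun s hs => ?_)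
    have hs' : s ≠ 0 := hs
    let _ : Invertible s⁻¹ := invertibleOfNonzero (inv_ne_zero hs')
    have hrev := Polynomial.eval₂_reverse_mul_pow (RingHom.id K) s⁻¹ g
    simp only [invOf_eq_inv, inv_inv, Polynomial.eval₂_id] at hrev
    simp only [Set.mem_ofPred_eq, Polynomial.eval_mul, Polynomial.eval_pow, Polynomial.eval_X,
      h s hs', ← hrev]
    rw [mul_assoc, ← mul_pow, inv_mul_cancel₀ hs', one_pow, mul_one]
  by_contra hf
  have hdeg := g.reverse_natDegree_le
  rw [← hmul, Polynomial.natDegree_mul_X_pow] at hdeg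
  · omega
  · rintro rfl
    simp at hf

theorem eval_eq_eval_zero_of_eval_eq_eval_inv {f g : Polynomial K}
    (h : ∀ s ≠ 0, f.eval s = g.eval s⁻¹) (s : K) : f.eval s = f.eval 0 := by
  rw [Polynomial.eq_C_of_natDegree_eq_zero (natDegree_eq_zero_of_eval_eq_eval_inv h)]
  simp

theorem eval_quadratic_of_laurent {p q : Polynomial K} {α β δ : K}
    (h : ∀ s ≠ 0, s⁻¹ * p.eval s + s * q.eval s⁻¹ = δ + α * s + β * s⁻¹) :
    p.coeff 1 + q.coeff 1 = δ ∧
      ∀ s, p.eval s = p.coeff 0 + p.coeff 1 * s + (α - q.coeff 0) * s ^ 2 := by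
  have expand (r : Polynomial K) (s : K) :
      r.eval s = r.coeff 0 + r.coeff 1 * s + r.divX.divX.eval s * s ^ 2 := by
    conv_lhs => rw [← r.divX_mul_X_add, ← r.divX.divX_mul_X_add]
    simp only [Polynomial.eval_add, Polynomial.eval_mul, Polynomial.eval_X, Polynomial.eval_C,
      Polynomial.coeff_divX]
    ring
  let f : Polynomial K := .X * p.divX.divX + .C (q.coeff 0 - α) * .X
  let g : Polynomial K :=
    .C (δ - p.coeff 1 - q.coeff 1) + .C (β - p.coeff 0) * .X - .X * q.divX.divX
  have hfg (s : K) (hs : s ≠ 0) : f.eval s = g.eval s⁻¹ := by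
    have hpq := h s hs
    rw [expand p, expand q] at hpq
    simp only [f, g, Polynomial.eval_add, Polynomial.eval_sub, Polynomial.eval_mul,
      Polynomial.eval_X, Polynomial.eval_C]
    field_simp at hpq ⊢
    linear_combination hpq
  have hf (s : K) : f.eval s = 0 := by
    rw [eval_eq_eval_zero_of_eval_eq_eval_inv hfg]
    simp [f]
  constructor
  · have hg := eval_eq_eval_zero_of_eval_eq_eval_inv (f := g) (g := f)
      (fun s hs => by rw [hfg _ (inv_ne_zero hs), inv_inv]) 1
    rw [← inv_one, ← hfg 1 one_ne_zero, hf] at hg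
    simp only [g, Polynomial.eval_add, Polynomial.eval_sub, Polynomial.eval_mul,
      Polynomial.eval_X, Polynomial.eval_C] at hg
    linear_combination hg
  · intro s
    have hs := hf s
    simp only [f, Polynomial.eval_add, Polynomial.eval_mul, Polynomial.eval_X,
      Polynomial.eval_C] at hs
    linear_combination expand p s + s * hs

end LaurentIdentities

section Slopes

variable {K ι : Type*} [Field K] [DecidableEq ι]

theorem smul_eq_smul_one_of_dotProduct_mulVec [Fintype ι] {B : Matrix ι ι K} {t d : K}
    (h : ∀ x η : ι → K, x ⬝ᵥ η = t → x ⬝ᵥ B *ᵥ η = d) :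
    t • B = d • (1 : Matrix ι ι K) := by
  have hdiag (i : ι) : t * B i i = d := by
    simpa [mul_comm] using h (Pi.single i 1) (Pi.single i t) (by simp)
  ext i j
  by_cases hij : i = j
  · subst hij
    simp [hdiag]
  · have hi := h (Pi.single i 1) (Pi.single i t) (by simp)
    have hj := h (Pi.single i 1) (Pi.single i t + Pi.single j 1) (by simp [dotProduct_add, hij])
    rw [mulVec_add, dotProduct_add, hi, add_eq_left] at hj
    have hBij : B i j = 0 := by simpa using hj
    simp [hij, hBij]

theorem affine_of_mul_add_eq_sub {a b g : K → K}
    (h : ∀ w τ, (w - τ) * (a w + b τ) = g w - g τ) (w : K) :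
    a w = a 0 + (a 1 - a 0) * w ∧ b w = b 0 + (a 1 - a 0) * w ∧
      g w = g 0 + (a 0 + b 0) * w + (a 1 - a 0) * w ^ 2 := by
  have hab (w : K) : a w + b 0 = a 0 + b w := by
    rcases eq_or_ne w 0 with rfl | hw
    · rfl
    · exact mul_left_cancel₀ hw (by linear_combination h w 0 + h 0 w)
  have ha : a w = a 0 + (a 1 - a 0) * w := by
    linear_combination h w 0 - h 1 0 - h w 1 - (w - 1) * hab 1
  exact ⟨ha, by linear_combination ha - hab w, by linear_combination w * ha - h w 0⟩

theorem exists_eq_add_smul_one [Infinite K] {A B : K → Matrix ι ι K} {g : K → K}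
    (h : ∀ w τ, (w - τ) • (A w + B τ) = (g w - g τ) • (1 : Matrix ι ι K)) (w : K) :
    ∃ s : K, A w = A 0 + s • (1 : Matrix ι ι K) := by
  classical
  obtain ⟨τ, hτ⟩ := Infinite.exists_notMem_finset ({w, 0} : Finset K)
  obtain ⟨hτw, hτ0⟩ : τ ≠ w ∧ τ ≠ 0 := by simpa using hτ
  have slope (w' : K) (hw' : τ ≠ w') :
      A w' + B τ = ((w' - τ)⁻¹ * (g w' - g τ)) • (1 : Matrix ι ι K) := by
    rw [mul_smul, ← h, inv_smul_smul₀ (sub_ne_zero.mpr hw'.symm)]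
  refine ⟨(w - τ)⁻¹ * (g w - g τ) - (0 - τ)⁻¹ * (g 0 - g τ), ?_⟩
  rw [sub_smul, ← slope w hτw, ← slope 0 hτ0]
  abel

theorem exists_affine_of_smul_add_eq [Infinite K] [Nonempty ι] {A B : K → Matrix ι ι K} {g : K → K}
    (h : ∀ w τ, (w - τ) • (A w + B τ) = (g w - g τ) • (1 : Matrix ι ι K)) :
    ∃ ν κ : K, (∀ w, A w = A 0 + (ν * w) • (1 : Matrix ι ι K)) ∧
      (∀ w, B w = κ • (1 : Matrix ι ι K) - A 0 + (ν * w) • (1 : Matrix ι ι K)) ∧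
      ∀ w, g w = g 0 + κ * w + ν * w ^ 2 := by
  let i : ι := Classical.arbitrary ι
  have hdiag := affine_of_mul_add_eq_sub (a := fun w => A w i i) (b := fun w => B w i i) (g := g)
    fun w τ => by simpa using congr_fun₂ (h w τ) i i
  have hA (w : K) : A w = A 0 + ((A 1 i i - A 0 i i) * w) • (1 : Matrix ι ι K) := by
    obtain ⟨s, hs⟩ := exists_eq_add_smul_one h w
    have hsi : A w i i = A 0 i i + s := by simpa using congr_fun₂ hs i i
    rw [hs, show s = (A 1 i i - A 0 i i) * w by linear_combination (hdiag w).1 - hsi]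
  have hB (w : K) : B w = B 0 + ((A 1 i i - A 0 i i) * w) • (1 : Matrix ι ι K) := by
    obtain ⟨s, hs⟩ := exists_eq_add_smul_one (A := B) (B := A) (g := g)
      (fun w τ => by
        rw [← neg_sub τ w, ← neg_sub (g τ), neg_smul, neg_smul, add_comm, h]) w
    have hsi : B w i i = B 0 i i + s := by simpa using congr_fun₂ hs i i
    rw [hs, show s = (A 1 i i - A 0 i i) * w by linear_combination (hdiag w).2.1 - hsi]
  have hAB : A 0 + B 0 = (A 0 i i + B 0 i i) • (1 : Matrix ι ι K) := by
    have h10 := h 1 0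
    rw [sub_zero, one_smul, hA 1, add_right_comm, (hdiag 1).2.2] at h10
    rw [← sub_eq_iff_eq_add.mpr h10.symm, ← sub_smul]
    congr 1
    ring
  refine ⟨_, _, hA, fun w => ?_, fun w => (hdiag w).2.2⟩
  rw [hB, ← hAB, add_sub_cancel_left]

end Slopes

section NormalForm

variable {K : Type*} {m n : ℕ}

/-- The coefficients of an infinitesimal automorphism of the quadric `w - τ = c * (X ⬝ᵥ η)`, read
off its component in the variables `(X, w)`. -/
@[ext]
structure NormalParams (n : ℕ) (K : Type*) where
  a : Fin n → K
  b : Fin n → K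
  a' : Fin n → K
  b' : Fin n → K
  N : Matrix (Fin n) (Fin n) K
  ν : K
  γ : K
  κ : K

namespace NormalParams

variable [CommRing K]

/-- The `X`-component of the vector field with coefficients `p`. -/
def field (p : NormalParams n K) (c : K) (X : Fin n → K) (w : K) : Fin n → K :=
  p.a + w • p.b + p.N *ᵥ X + (p.ν * w + c * (p.b' ⬝ᵥ X)) • X

theorem field_apply (p : NormalParams n K) (c : K) (X : Fin n → K) (w : K) (i : Fin n) :
    p.field c X w i = p.a i + w * p.b i + (p.N *ᵥ X) i + (p.ν * w + c * (p.b' ⬝ᵥ X)) * X i :=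
  rfl

/-- The `w`-component of the vector field with coefficients `p`. -/
def last (p : NormalParams n K) (c : K) (X : Fin n → K) (w : K) : K :=
  p.γ + p.κ * w + p.ν * w ^ 2 + c * ((p.a' + w • p.b') ⬝ᵥ X)

/-- The coefficients of the component in the variables `(η, τ)` of the same infinitesimal
automorphism. -/
def dual (p : NormalParams n K) : NormalParams n K where
  a := p.a'
  b := p.b'
  a' := p.a
  b' := p.b
  N := p.κ • 1 - p.Nᵀ
  ν := p.ν
  γ := p.γ
  κ := p.κ

end NormalParams

/-- The polynomial vector field `(F, G)` is related by the map `(z, w) ↦ (x z, w)` to the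
infinitesimal automorphism with coefficients `p` of the quadric with constant `c`. -/
def HasNormalForm [CommRing K] (c : K) (x : Fin n → MvPolynomial (Fin m) K)
    (F : Fin m → MvPolynomial (Fin (m + 1)) K) (G : MvPolynomial (Fin (m + 1)) K)
    (p : NormalParams n K) : Prop :=
  ∀ z w, push x F z w = p.field c (evalVec x z) w ∧ eval (pt z w) G = p.last c (evalVec x z) w

theorem HasNormalForm.isPolarPair [CommRing K] {c : K} {x y : Fin n → MvPolynomial (Fin m) K}
    {F F' : Fin m → MvPolynomial (Fin (m + 1)) K} {G G' : MvPolynomial (Fin (m + 1)) K}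
    {p : NormalParams n K} (H : HasNormalForm c x F G p) (H' : HasNormalForm (-c) y F' G' p.dual) :
    IsPolarPair c x y F F' G G' := by
  intro z ζ w τ h
  obtain rfl : w = τ + c * (evalVec x z ⬝ᵥ evalVec y ζ) := by linear_combination h
  have hN : (p.Nᵀ *ᵥ evalVec y ζ) ⬝ᵥ evalVec x z = (p.N *ᵥ evalVec x z) ⬝ᵥ evalVec y ζ := by
    rw [mulVec_transpose, ← dotProduct_mulVec, dotProduct_comm]
  rw [(H z _).1, (H z _).2, (H' ζ τ).1, (H' ζ τ).2]
  simp only [NormalParams.field, NormalParams.last, NormalParams.dual, add_dotProduct,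
    smul_dotProduct, sub_mulVec, sub_dotProduct, smul_mulVec, one_mulVec, smul_eq_mul, hN,
    dotProduct_comm (evalVec y ζ) (evalVec x z)]
  ring

section RayPolynomial

variable [CommRing K]

/-- The linear part at `X = 0` of the `w`-dependent vector field `h`. -/
def linPart (h : Fin n → MvPolynomial (Fin (n + 1)) K) (w : K) :
    Matrix (Fin n) (Fin n) K :=
  of fun i j => eval (pt 0 w) (pderiv j.castSucc (h i))

/-- The polynomial `s ↦ h (s • X, w) ⬝ᵥ η`. -/
def rayPoly (h : Fin n → MvPolynomial (Fin (n + 1)) K) (X η : Fin n → K)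
    (w : K) : Polynomial K :=
  ∑ i, linePoly (pt 0 w) (pt X 0) (h i) * .C (η i)

theorem pt_zero_add_smul (X : Fin n → K) (w s : K) :
    pt 0 w + s • pt X 0 = pt (s • X) w := by
  ext i
  induction i using Fin.lastCases <;> simp

theorem eval_rayPoly (h : Fin n → MvPolynomial (Fin (n + 1)) K) (X η : Fin n → K) (w s : K) :
    (rayPoly h X η w).eval s = evalVec h (pt (s • X) w) ⬝ᵥ η := by
  simp [rayPoly, Polynomial.eval_finsetSum, eval_linePoly, pt_zero_add_smul, evalVec, dotProduct]

theorem coeff_zero_rayPoly (h : Fin n → MvPolynomial (Fin (n + 1)) K) (X η : Fin n → K) (w : K) :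
    (rayPoly h X η w).coeff 0 = evalVec h (pt 0 w) ⬝ᵥ η := by
  rw [Polynomial.coeff_zero_eq_eval_zero, eval_rayPoly, zero_smul]

theorem coeff_one_rayPoly (h : Fin n → MvPolynomial (Fin (n + 1)) K) (X η : Fin n → K) (w : K) :
    (rayPoly h X η w).coeff 1 = (linPart h w *ᵥ X) ⬝ᵥ η := by
  simp [rayPoly, Polynomial.finsetSum_coeff, coeff_one_linePoly, Fin.sum_univ_castSucc, linPart,
    mulVec, dotProduct]

end RayPolynomial

section Quadric

variable [Field K] {c : K} {h h' : Fin n → MvPolynomial (Fin (n + 1)) K}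
  {g g' : MvPolynomial (Fin (n + 1)) K}

namespace IsPolarPair

theorem eval_zero_eq (H : IsPolarPair c X X h h' g g') (w : K) :
    eval (pt 0 w) g = eval (pt 0 w) g' := by
  simpa [sub_eq_zero] using isPolarPair_X_iff.mp H 0 0 w w (by simp)

theorem eval_eq (H : IsPolarPair c X X h h' g g') (x : Fin n → K) (w : K) :
    eval (pt x w) g = eval (pt 0 w) g + c * (evalVec h' (pt 0 w) ⬝ᵥ x) := by
  have hx := isPolarPair_X_iff.mp H x 0 w w (by simp)
  rw [dotProduct_zero, zero_add] at hx
  linear_combination hx - H.eval_zero_eq w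

/-- Replacing `(x, η)` by `(s • x, s⁻¹ • η)` preserves the quadric and turns the equation into an
identity of Laurent polynomials in `s`. -/
theorem rayPoly_laurent (H : IsPolarPair c X X h h' g g') (hc : c ≠ 0) {x η : Fin n → K} {w τ : K}
    (hw : w - τ = c * (x ⬝ᵥ η)) {s : K} (hs : s ≠ 0) :
    s⁻¹ * (rayPoly h x η w).eval s + s * (rayPoly h' η x τ).eval s⁻¹ =
      c⁻¹ * (eval (pt 0 w) g - eval (pt 0 τ) g) + (evalVec h' (pt 0 w) ⬝ᵥ x) * s +
        (evalVec h (pt 0 τ) ⬝ᵥ η) * s⁻¹ := by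
  have hsx : w - τ = c * ((s • x) ⬝ᵥ (s⁻¹ • η)) := by
    rw [smul_dotProduct, dotProduct_smul, smul_smul, mul_inv_cancel₀ hs, one_smul, hw]
  have key := isPolarPair_X_iff.mp H _ _ _ _ hsx
  rw [H.eval_eq, H.symm.eval_eq, ← H.eval_zero_eq] at key
  simp only [dotProduct_smul, smul_eq_mul] at key
  rw [eval_rayPoly, eval_rayPoly]
  field_simp at key ⊢
  linear_combination -key

section Laurent

variable [Infinite K]

theorem linPart_add_linPart (H : IsPolarPair c X X h h' g g') (hc : c ≠ 0) {x η : Fin n → K}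
    {w τ : K} (hw : w - τ = c * (x ⬝ᵥ η)) :
    (linPart h w *ᵥ x) ⬝ᵥ η + (linPart h' τ *ᵥ η) ⬝ᵥ x =
      c⁻¹ * (eval (pt 0 w) g - eval (pt 0 τ) g) := by
  rw [← coeff_one_rayPoly, ← coeff_one_rayPoly]
  exact (eval_quadratic_of_laurent fun s hs => H.rayPoly_laurent hc hw hs).1

theorem evalVec_dotProduct_eq (H : IsPolarPair c X X h h' g g') (hc : c ≠ 0) {x η : Fin n → K}
    {w τ : K} (hw : w - τ = c * (x ⬝ᵥ η)) :
    evalVec h (pt x w) ⬝ᵥ η = evalVec h (pt 0 w) ⬝ᵥ η + (linPart h w *ᵥ x) ⬝ᵥ η +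
      (evalVec h' (pt 0 w) - evalVec h' (pt 0 τ)) ⬝ᵥ x := by
  have key := (eval_quadratic_of_laurent fun s hs => H.rayPoly_laurent hc hw hs).2 1
  rw [eval_rayPoly, coeff_zero_rayPoly, coeff_zero_rayPoly, coeff_one_rayPoly, one_smul] at key
  rw [key, sub_dotProduct]
  ring

theorem exists_evalVec_zero_eq (H : IsPolarPair c X X h h' g g') (hc : c ≠ 0) :
    ∃ b' : Fin n → K, ∀ w, evalVec h' (pt 0 w) = evalVec h' (pt 0 0) + w • b' := by
  let e (k : Fin n) : Fin n → K := Pi.single k 1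
  refine ⟨fun k => c⁻¹ * (evalVec h (pt (e k) 0) - evalVec h (pt 0 0) - linPart h 0 *ᵥ e k) k,
    fun τ => funext fun k => ?_⟩
  have hk := H.evalVec_dotProduct_eq hc (x := e k) (η := Pi.single k (-c⁻¹ * τ)) (w := 0) (τ := τ)
    (by simp [e, hc])
  simp only [dotProduct_single, e, Pi.sub_apply] at hk
  simp only [Pi.add_apply, Pi.smul_apply, Pi.sub_apply, smul_eq_mul, e]
  linear_combination hk

theorem evalVec_eq (H : IsPolarPair c X X h h' g g') (hc : c ≠ 0) {b' : Fin n → K}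
    (hb' : ∀ w, evalVec h' (pt 0 w) = evalVec h' (pt 0 0) + w • b') (x : Fin n → K) (w : K) :
    evalVec h (pt x w) = evalVec h (pt 0 w) + linPart h w *ᵥ x + (c * (b' ⬝ᵥ x)) • x := by
  refine dotProduct_eq _ _ fun η => ?_
  rw [H.evalVec_dotProduct_eq hc (τ := w - c * (x ⬝ᵥ η)) (by ring), hb' w, hb' (w - _)]
  simp only [add_dotProduct, sub_dotProduct, smul_dotProduct, smul_eq_mul]
  ring

theorem smul_linPart_add_linPart (H : IsPolarPair c X X h h' g g') (hc : c ≠ 0) (w τ : K) :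
    (w - τ) • ((linPart h w)ᵀ + linPart h' τ) =
      (eval (pt 0 w) g - eval (pt 0 τ) g) • (1 : Matrix (Fin n) (Fin n) K) := by
  have key : (c⁻¹ * (w - τ)) • ((linPart h w)ᵀ + linPart h' τ) =
      (c⁻¹ * (eval (pt 0 w) g - eval (pt 0 τ) g)) • (1 : Matrix (Fin n) (Fin n) K) := by
    refine smul_eq_smul_one_of_dotProduct_mulVec fun x η hx => ?_
    rw [← H.linPart_add_linPart hc (x := x) (η := η) (by rw [hx]; field_simp), add_mulVec,
      dotProduct_add, mulVec_transpose, ← dotProduct_comm (vecMul _ _), ← dotProduct_mulVec,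
      dotProduct_comm η, dotProduct_comm x]
  rwa [mul_smul, mul_smul, smul_right_inj (inv_ne_zero hc)] at key

theorem exists_hasNormalForm_X [NeZero n] (H : IsPolarPair c X X h h' g g') (hc : c ≠ 0) :
    ∃ p : NormalParams n K, HasNormalForm c X h g p ∧ HasNormalForm (-c) X h' g' p.dual := by
  obtain ⟨b', hb'⟩ := H.exists_evalVec_zero_eq hc
  obtain ⟨b, hb⟩ := H.symm.exists_evalVec_zero_eq (neg_ne_zero.mpr hc)
  obtain ⟨ν, κ, hA, hB, hg⟩ := exists_affine_of_smul_add_eq (H.smul_linPart_add_linPart hc)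
  have hA' (w : K) : linPart h w = linPart h 0 + (ν * w) • 1 := by
    simpa using congrArg transpose (hA w)
  refine ⟨⟨evalVec h (pt 0 0), b, evalVec h' (pt 0 0), b', linPart h 0, ν, eval (pt 0 0) g, κ⟩,
    fun x w => ⟨?_, ?_⟩, fun η τ => ⟨?_, ?_⟩⟩
  · rw [push_X, evalVec_X, H.evalVec_eq hc hb', hb, hA', NormalParams.field, add_mulVec,
      smul_mulVec, one_mulVec, add_smul]
    abel
  · rw [evalVec_X, H.eval_eq, hg, hb', NormalParams.last]
  · rw [push_X, evalVec_X, H.symm.evalVec_eq (neg_ne_zero.mpr hc) hb, hb', hB, NormalParams.field,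
      NormalParams.dual, add_mulVec, smul_mulVec, one_mulVec, add_smul]
    abel
  · rw [evalVec_X, H.symm.eval_eq, ← H.eval_zero_eq, hg, hb, NormalParams.last, NormalParams.dual]

end Laurent

end IsPolarPair

end Quadric

theorem IsPolarPair.exists_hasNormalForm [Field K] [Infinite K] [NeZero n] {c : K}
    {x y : Fin n → MvPolynomial (Fin m) K} {F F' : Fin m → MvPolynomial (Fin (m + 1)) K}
    {G G' : MvPolynomial (Fin (m + 1)) K} (H : IsPolarPair c x y F F' G G') (hc : c ≠ 0)
    (hx : CoversTorus x) (hy : CoversTorus y) (hx0 : evalVec x 0 = 0) (hy0 : evalVec y 0 = 0) :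
    ∃ p : NormalParams n K, HasNormalForm c x F G p ∧ HasNormalForm (-c) y F' G' p.dual := by
  obtain ⟨h, hh⟩ := H.exists_push_eq hc hy hy0
  obtain ⟨h', hh'⟩ := H.symm.exists_push_eq (neg_ne_zero.mpr hc) hx hx0
  obtain ⟨g, hg⟩ := H.exists_eval_eq hy0
  obtain ⟨g', hg'⟩ := H.symm.exists_eval_eq hx0
  obtain ⟨p, hp, hp'⟩ := (H.descend hx hy hh hh' hg hg').exists_hasNormalForm_X hc
  refine ⟨p, fun z w => ?_, fun ζ τ => ?_⟩
  · rw [hh, hg, ← push_X, (hp _ _).1, (hp _ _).2, evalVec_X]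
    exact ⟨rfl, rfl⟩
  · rw [hh', hg', ← push_X, (hp' _ _).1, (hp' _ _).2, evalVec_X]
    exact ⟨rfl, rfl⟩

namespace NormalParams

theorem eq_of_forall_eq [Field K] [NeZero n] {c : K} (hc : c ≠ 0)
    {p q : NormalParams n K} (hfield : ∀ X w, p.field c X w = q.field c X w)
    (hlast : ∀ X w, p.last c X w = q.last c X w) : p = q := by
  have ha : p.a = q.a := by simpa [field] using hfield 0 0
  have hb : p.b = q.b := by simpa [field, ha] using hfield 0 1
  have hγ : p.γ = q.γ := by simpa [last] using hlast 0 0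
  have ha' : p.a' = q.a' := dotProduct_eq _ _ fun X => by simpa [last, hγ, hc] using hlast X 0
  have hκν : p.κ + p.ν = q.κ + q.ν := by simpa [last, hγ, add_assoc] using hlast 0 1
  have hb' : p.b' = q.b' := dotProduct_eq _ _ fun X => by
    simpa [last, hγ, ha', add_assoc, add_dotProduct, hκν, hc, ← add_assoc p.κ] using hlast X 1
  have hN : p.N = q.N := by
    refine mulVec_injective (funext fun X => ?_)
    simpa [field, ha, hb'] using hfield X 0
  have hν : p.ν = q.ν := by
    simpa [field, ha, hb, hb', hN, add_smul] using congr_fun (hfield 1 1) 0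
  have hκ : p.κ = q.κ := by simpa [hν] using hκν
  ext1 <;> assumption

variable [CommRing K]

theorem isPolyFun_field (p : NormalParams n K) (c w : K) (i : Fin n) :
    IsPolyFun fun X => p.field c X w i := by
  simp only [field_apply, mulVec]
  fun_prop

theorem isPolyFun_last (p : NormalParams n K) (c w : K) : IsPolyFun fun X => p.last c X w := by
  unfold last
  fun_prop

end NormalParams

theorem CoversTorus.normalParams_eq [Field K] [Infinite K] [NeZero n] {c : K} (hc : c ≠ 0)
    {x : Fin n → MvPolynomial (Fin m) K} (hx : CoversTorus x) {p q : NormalParams n K}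
    (hfield : ∀ z w, p.field c (evalVec x z) w = q.field c (evalVec x z) w)
    (hlast : ∀ z w, p.last c (evalVec x z) w = q.last c (evalVec x z) w) : p = q :=
  NormalParams.eq_of_forall_eq hc
    (fun X w => funext fun i => eq_of_coversTorus hx (p.isPolyFun_field c w i)
      (q.isPolyFun_field c w i) (fun z => congr_fun (hfield z w) i) X)
    (fun X w => eq_of_coversTorus hx (p.isPolyFun_last c w) (q.isPolyFun_last c w)
      (fun z => hlast z w) X)

end NormalForm

section Hermitian

open ComplexConjugate

variable {ι : Type*} {m n : ℕ}

/-- The conjugate of the vector `v`, with indices permuted by `σ`. The Hermitian form with matrix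
the permutation matrix of `σ` is `v ⬝ᵥ twist σ v`. -/
def twist (σ : Equiv.Perm ι) (v : ι → ℂ) (i : ι) : ℂ := conj (v (σ i))

theorem twist_twist {σ : Equiv.Perm ι} (hσ : Function.Involutive σ) (v : ι → ℂ) :
    twist σ (twist σ v) = v := by
  ext i
  simp [twist, hσ i]

theorem twist_dotProduct [Fintype ι] {σ : Equiv.Perm ι} (hσ : Function.Involutive σ)
    (v w : ι → ℂ) : twist σ v ⬝ᵥ w = conj (v ⬝ᵥ twist σ w) := by
  simp only [dotProduct, twist, map_sum, map_mul, conj_conj]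
  exact Fintype.sum_equiv σ _ _ fun i => by rw [hσ i]

/-- The conjugate of the polynomial map `x`, with components permuted by `σ`. -/
def conjMap {τ : Type*} (σ : Equiv.Perm ι) (x : ι → MvPolynomial τ ℂ) (i : ι) : MvPolynomial τ ℂ :=
  map conj (x (σ i))

theorem eval_star_map_conj {τ : Type*} (v : τ → ℂ) (p : MvPolynomial τ ℂ) :
    eval (star v) (map conj p) = conj (eval v p) := by
  rw [eval_map]
  exact (eval₂_comp_left conj (RingHom.id ℂ) v p).symm

theorem evalVec_conjMap {τ : Type*} (σ : Equiv.Perm ι) (x : ι → MvPolynomial τ ℂ) (z : τ → ℂ) :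
    evalVec (conjMap σ x) (star z) = twist σ (evalVec x z) := by
  ext i
  simp only [evalVec, conjMap, eval_star_map_conj, twist]

theorem star_pt (z : Fin n → ℂ) (w : ℂ) : star (pt z w) = pt (star z) (conj w) := by
  ext i
  induction i using Fin.lastCases <;> simp

theorem push_conjMap (σ : Equiv.Perm ι) (x : ι → MvPolynomial (Fin m) ℂ)
    (F : Fin m → MvPolynomial (Fin (m + 1)) ℂ) (z : Fin m → ℂ) (w : ℂ) :
    push (conjMap σ x) (conjMap 1 F) (star z) (conj w) = twist σ (push x F z w) := by
  ext i
  simp only [push, ← star_pt, evalVec_conjMap, twist, mulVec, dotProduct, jacobian, of_apply,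
    conjMap, pderiv_map, eval_star_map_conj, map_sum, map_mul, Equiv.Perm.one_apply]

theorem CoversTorus.conjMap {x : Fin n → MvPolynomial (Fin m) ℂ} (hx : CoversTorus x)
    {σ : Equiv.Perm (Fin n)} (hσ : Function.Involutive σ) : CoversTorus (conjMap σ x) := by
  intro Y hY
  obtain ⟨z, hz⟩ := hx (twist σ Y) fun i => by simp [twist, hY]
  exact ⟨star z, by rw [evalVec_conjMap, hz, twist_twist hσ]⟩

/-- The polynomial vector field `(F, G)` is an infinitesimal CR automorphism of
`Im w = x z ⬝ᵥ twist σ (x z)`. -/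
def IsInfAut (σ : Equiv.Perm (Fin n)) (x : Fin n → MvPolynomial (Fin m) ℂ)
    (F : Fin m → MvPolynomial (Fin (m + 1)) ℂ) (G : MvPolynomial (Fin (m + 1)) ℂ) : Prop :=
  ∀ (z : Fin m → ℂ) (u : ℝ),
    let w := u + I * (evalVec x z ⬝ᵥ twist σ (evalVec x z))
    (eval (pt z w) G / (2 * I) - push x F z w ⬝ᵥ twist σ (evalVec x z)).re = 0

variable {σ : Equiv.Perm (Fin n)} {x : Fin n → MvPolynomial (Fin m) ℂ}
  {F : Fin m → MvPolynomial (Fin (m + 1)) ℂ} {G : MvPolynomial (Fin (m + 1)) ℂ}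

theorem conj_two_mul_I : conj (2 * I) = -(2 * I) := by simp [map_ofNat]

theorem re_div_two_mul_I_sub_eq_zero_iff {a b : ℂ} :
    (a / (2 * I) - b).re = 0 ↔ a - conj a = 2 * I * (b + conj b) := by
  have h : a - conj a - 2 * I * (b + conj b) = 2 * I * (2 * (a / (2 * I) - b).re : ℝ) := by
    rw [← add_conj]
    simp only [map_sub, map_div₀, conj_two_mul_I]
    field_simp
    ring
  rw [← sub_eq_zero (b := 2 * I * _), h, mul_eq_zero, ofReal_eq_zero, mul_eq_zero]
  simp

theorem conj_real_add_I_mul_hermitian (hσ : Function.Involutive σ) (u : ℝ) (X : Fin n → ℂ) :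
    conj (u + I * (X ⬝ᵥ twist σ X)) = u - I * (X ⬝ᵥ twist σ X) := by
  have hX : conj (X ⬝ᵥ twist σ X) = X ⬝ᵥ twist σ X := by
    rw [← twist_dotProduct hσ, dotProduct_comm]
  simp [hX, sub_eq_add_neg]

theorem isInfAut_iff_polar (hσ : Function.Involutive σ) :
    IsInfAut σ x F G ↔ ∀ (z : Fin m → ℂ) (u : ℝ) (w : ℂ),
      w = u + I * (evalVec x z ⬝ᵥ twist σ (evalVec x z)) →
      eval (pt z w) G - eval (pt (star z) (conj w)) (map conj G) =
        2 * I * (push x F z w ⬝ᵥ evalVec (conjMap σ x) (star z) +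
          push (conjMap σ x) (conjMap 1 F) (star z) (conj w) ⬝ᵥ evalVec x z) := by
  simp only [IsInfAut, forall_eq, re_div_two_mul_I_sub_eq_zero_iff, ← star_pt, eval_star_map_conj,
    push_conjMap, evalVec_conjMap, twist_dotProduct hσ]

theorem IsPolarPair.isInfAut (hσ : Function.Involutive σ)
    (H : IsPolarPair (2 * I) x (conjMap σ x) F (conjMap 1 F) G (map conj G)) :
    IsInfAut σ x F G := by
  refine (isInfAut_iff_polar hσ).mpr fun z u w hw => H z (star z) _ _ ?_
  rw [hw, conj_real_add_I_mul_hermitian hσ, evalVec_conjMap]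
  ring

theorem IsInfAut.isPolarPair (hσ : Function.Involutive σ) (H : IsInfAut σ x F G) :
    IsPolarPair (2 * I) x (conjMap σ x) F (conjMap 1 F) G (map conj G) := by
  let z (v : Fin (m + 1) ⊕ Fin (m + 1) → ℂ) (j : Fin m) : ℂ := v (.inl j.castSucc)
  let ζ (v : Fin (m + 1) ⊕ Fin (m + 1) → ℂ) (j : Fin m) : ℂ := v (.inr j.castSucc)
  let u (v : Fin (m + 1) ⊕ Fin (m + 1) → ℂ) : ℂ :=
    (v (.inl (Fin.last m)) + v (.inr (Fin.last m))) / 2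
  let φ (v : Fin (m + 1) ⊕ Fin (m + 1) → ℂ) : ℂ := evalVec x (z v) ⬝ᵥ evalVec (conjMap σ x) (ζ v)
  let defect (v : Fin (m + 1) ⊕ Fin (m + 1) → ℂ) : ℂ :=
    eval (pt (z v) (u v + I * φ v)) G - eval (pt (ζ v) (u v - I * φ v)) (map conj G) -
      2 * I * (push x F (z v) (u v + I * φ v) ⬝ᵥ evalVec (conjMap σ x) (ζ v) +
        push (conjMap σ x) (conjMap 1 F) (ζ v) (u v - I * φ v) ⬝ᵥ evalVec x (z v))
  have hdefect : IsPolyFun defect := by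
    unfold defect φ u z ζ push mulVec jacobian evalVec
    simp only [div_eq_mul_inv, of_apply]
    fun_prop
  have hreal (a : Fin (m + 1) → ℂ) : defect (Sum.elim a (star a)) = 0 := by
    have ha := (isInfAut_iff_polar hσ).mp H (fun j => a j.castSucc) (a (Fin.last m)).re _ rfl
    have hu : u (Sum.elim a (star a)) = (a (Fin.last m)).re := by
      simp [u, add_conj]
    have hζ : ζ (Sum.elim a (star a)) = star (z (Sum.elim a (star a))) := rfl
    have hz : z (Sum.elim a (star a)) = fun j => a j.castSucc := rfl
    rw [conj_real_add_I_mul_hermitian hσ] at ha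
    simp only [defect, φ, hu, hζ, hz, sub_eq_zero, evalVec_conjMap] at ha ⊢
    exact ha
  intro z₀ ζ₀ w τ hw
  have h0 := hdefect.eq_zero_of_conj hreal (pt z₀ ((w + τ) / 2)) (pt ζ₀ ((w + τ) / 2))
  simp only [defect, u, φ, z, ζ, Sum.elim_inl, Sum.elim_inr, pt_castSucc, pt_last] at h0
  have hw' : ((w + τ) / 2 + (w + τ) / 2) / 2 +
      I * (evalVec x z₀ ⬝ᵥ evalVec (conjMap σ x) ζ₀) = w := by
    linear_combination -hw / 2
  have hτ' : ((w + τ) / 2 + (w + τ) / 2) / 2 -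
      I * (evalVec x z₀ ⬝ᵥ evalVec (conjMap σ x) ζ₀) = τ := by
    linear_combination hw / 2
  rw [hw', hτ'] at h0
  exact sub_eq_zero.mp h0

/-- The coefficients of the conjugate vector field, in coordinates permuted by `σ`. -/
def NormalParams.conj (p : NormalParams n ℂ) (σ : Equiv.Perm (Fin n)) : NormalParams n ℂ where
  a := twist σ p.a
  b := twist σ p.b
  a' := twist σ p.a'
  b' := twist σ p.b'
  N := of fun i j => starRingEnd ℂ (p.N (σ i) (σ j))
  ν := starRingEnd ℂ p.ν
  γ := starRingEnd ℂ p.γ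
  κ := starRingEnd ℂ p.κ

theorem twist_dotProduct_twist {ι : Type*} [Fintype ι] (σ : Equiv.Perm ι) (v w : ι → ℂ) :
    twist σ v ⬝ᵥ twist σ w = conj (v ⬝ᵥ w) := by
  simp only [dotProduct, twist, map_sum, map_mul]
  exact Equiv.sum_comp σ fun i => conj (v i) * conj (w i)

theorem NormalParams.field_conj (p : NormalParams n ℂ) (σ : Equiv.Perm (Fin n)) (c : ℂ)
    (X : Fin n → ℂ) (w : ℂ) :
    (p.conj σ).field (conj c) (twist σ X) (conj w) = twist σ (p.field c X w) := by
  ext i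
  have hN : ((p.conj σ).N *ᵥ twist σ X) i = conj ((p.N *ᵥ X) (σ i)) :=
    twist_dotProduct_twist σ (p.N (σ i)) X
  have hb : (p.conj σ).b' ⬝ᵥ twist σ X = conj (p.b' ⬝ᵥ X) := twist_dotProduct_twist σ p.b' X
  simp only [field, Pi.add_apply, Pi.smul_apply, smul_eq_mul, hN, hb, twist, map_add, map_mul]
  rfl

theorem NormalParams.last_conj (p : NormalParams n ℂ) (σ : Equiv.Perm (Fin n)) (c : ℂ)
    (X : Fin n → ℂ) (w : ℂ) :
    (p.conj σ).last (conj c) (twist σ X) (conj w) = conj (p.last c X w) := by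
  have ha : (p.conj σ).a' ⬝ᵥ twist σ X = conj (p.a' ⬝ᵥ X) := twist_dotProduct_twist σ p.a' X
  have hb : (p.conj σ).b' ⬝ᵥ twist σ X = conj (p.b' ⬝ᵥ X) := twist_dotProduct_twist σ p.b' X
  simp only [last, add_dotProduct, smul_dotProduct, smul_eq_mul, ha, hb, map_add, map_mul, map_pow]
  rfl

theorem HasNormalForm.conj {c : ℂ} {p : NormalParams n ℂ} (H : HasNormalForm c x F G p)
    (σ : Equiv.Perm (Fin n)) :
    HasNormalForm (conj c) (conjMap σ x) (conjMap 1 F) (map conj G) (p.conj σ) := by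
  intro ζ τ
  obtain ⟨z, rfl⟩ : ∃ z, star z = ζ := ⟨star ζ, star_star ζ⟩
  obtain ⟨w, rfl⟩ : ∃ w, conj w = τ := ⟨conj τ, conj_conj τ⟩
  rw [push_conjMap, evalVec_conjMap, ← star_pt, eval_star_map_conj, (H z w).1, (H z w).2,
    p.field_conj, p.last_conj]
  exact ⟨rfl, rfl⟩

theorem isInfAut_iff_exists_hasNormalForm [NeZero n] (hσ : Function.Involutive σ)
    (hx : CoversTorus x) (hx0 : evalVec x 0 = 0) :
    IsInfAut σ x F G ↔
      ∃ p : NormalParams n ℂ, HasNormalForm (2 * I) x F G p ∧ p.conj σ = p.dual := by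
  constructor
  · intro H
    have hy0 : evalVec (conjMap σ x) 0 = 0 := by
      rw [← star_zero, evalVec_conjMap, hx0]
      exact funext fun _ => map_zero _
    obtain ⟨p, hp, hp'⟩ :=
      (H.isPolarPair hσ).exists_hasNormalForm (by simp) hx (hx.conjMap hσ) hx0 hy0
    have hpc := hp.conj σ
    rw [conj_two_mul_I] at hpc
    exact ⟨p, hp, (hx.conjMap hσ).normalParams_eq (c := -(2 * I)) (by simp)
      (fun z w => (hpc z w).1.symm.trans (hp' z w).1)
      fun z w => (hpc z w).2.symm.trans (hp' z w).2⟩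
  · rintro ⟨p, hp, hpσ⟩
    refine (hp.isPolarPair ?_).isInfAut hσ
    rw [← hpσ, ← conj_two_mul_I]
    exact hp.conj σ

end Hermitian

section MonomialMaps

variable {n : ℕ}

section Degree

variable {K : Type*} [Field K] {τ : Type*}

theorem exists_coeff_ne_zero_of_coeff_mul_pderiv_monomial_ne_zero {f : MvPolynomial τ K} {j : τ}
    {s m : τ →₀ ℕ} {a : K} (h : coeff m (f * pderiv j (monomial s a)) ≠ 0) :
    ∃ d, coeff d f ≠ 0 ∧ m + Finsupp.single j 1 = d + s := by
  classical
  rw [pderiv_monomial, coeff_mul_monomial'] at h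
  obtain ⟨hle, hd⟩ := ite_ne_right_iff.mp h
  have hs : s - Finsupp.single j 1 + Finsupp.single j 1 = s := by
    refine tsub_add_cancel_of_le (Finsupp.single_le_iff.mpr (Nat.one_le_iff_ne_zero.mpr ?_))
    rintro hsj
    simp [hsj] at hd
  refine ⟨m - (s - Finsupp.single j 1), left_ne_zero_of_mul hd, ?_⟩
  rw [← hs, ← add_assoc, hs, tsub_add_cancel_of_le hle]

theorem coeff_sum_mul_pderiv_monomial [Fintype τ] (f : τ → MvPolynomial τ K) (s : τ →₀ ℕ) (j : τ)
    (a : K) : coeff s (∑ k, f k * pderiv k (monomial (s + Finsupp.single j 1) a)) =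
      coeff 0 (f j) * (a * (s j + 1)) := by
  classical
  rw [coeff_sum, Fintype.sum_eq_single j]
  · simp [pderiv_monomial, coeff_mul_monomial']
  · intro k hkj
    by_contra hk
    obtain ⟨d, -, hd⟩ := exists_coeff_ne_zero_of_coeff_mul_pderiv_monomial_ne_zero hk
    have := DFunLike.congr_fun hd j
    simp [hkj] at this
    lia

theorem eval_zero_pderiv_monomial {s : τ →₀ ℕ} (hs : 2 ≤ s.degree) (j : τ) (a : K) :
    eval 0 (pderiv j (monomial s a)) = 0 := by
  by_contra h
  rw [eval_zero, constantCoeff_eq, ← one_mul (pderiv j _)] at h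
  obtain ⟨d, -, hd⟩ := exists_coeff_ne_zero_of_coeff_mul_pderiv_monomial_ne_zero h
  have hdeg := congr_arg Finsupp.degree hd
  simp only [map_add, map_zero, Finsupp.degree_single] at hdeg
  lia

end Degree

/-- The polynomial map with components `c i * z ^ e i`. -/
def monomialMap {K : Type*} [CommSemiring K] (c : Fin n → K) (e : Fin n → Fin n →₀ ℕ)
    (i : Fin n) : MvPolynomial (Fin n) K :=
  monomial (e i) (c i)

/-- The matrix whose rows are the exponents of a monomial map. -/
def expMatrix (e : Fin n → Fin n →₀ ℕ) : Matrix (Fin n) (Fin n) ℂ := of fun i j => (e i j : ℂ)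

theorem evalVec_monomialMap_zero {K : Type*} [CommRing K] (c : Fin n → K)
    {e : Fin n → Fin n →₀ ℕ} (he : ∀ i, e i ≠ 0) : evalVec (monomialMap c e) 0 = 0 := by
  classical
  ext i
  rw [evalVec, monomialMap, eval_zero, constantCoeff_eq, coeff_monomial, if_neg (he i),
    Pi.zero_apply]

variable {c : Fin n → ℂ} {e : Fin n → Fin n →₀ ℕ}

theorem jacobian_monomialMap_mul_diagonal (c : Fin n → ℂ) (e : Fin n → Fin n →₀ ℕ)
    (z : Fin n → ℂ) : jacobian (monomialMap c e) z * diagonal z =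
      diagonal (evalVec (monomialMap c e) z) * expMatrix e := by
  ext i j
  have h := congr_arg (eval z) (X_mul_pderiv_monomial (i := j) (m := e i) (r := c i))
  rw [map_mul, eval_X, map_nsmul, nsmul_eq_mul] at h
  rw [mul_diagonal, diagonal_mul, mul_comm, mul_comm (evalVec _ _ _)]
  exact h

theorem evalVec_monomialMap_ne_zero (hc : ∀ i, c i ≠ 0) {z : Fin n → ℂ} (hz : ∀ j, z j ≠ 0)
    (i : Fin n) : evalVec (monomialMap c e) z i ≠ 0 := by
  rw [evalVec, monomialMap, eval_monomial]
  exact mul_ne_zero (hc i) (Finset.prod_ne_zero_iff.mpr fun j _ => pow_ne_zero _ (hz j))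

theorem det_jacobian_monomialMap_ne_zero (hc : ∀ i, c i ≠ 0) (he : (expMatrix e).det ≠ 0)
    {z : Fin n → ℂ} (hz : ∀ j, z j ≠ 0) : (jacobian (monomialMap c e) z).det ≠ 0 := by
  refine left_ne_zero_of_mul (b := (diagonal z).det) ?_
  rw [← det_mul, jacobian_monomialMap_mul_diagonal, det_mul, det_diagonal]
  exact mul_ne_zero (Finset.prod_ne_zero_iff.mpr fun i _ => evalVec_monomialMap_ne_zero hc hz i) he

theorem eq_of_push_monomialMap_eq (hc : ∀ i, c i ≠ 0) (he : (expMatrix e).det ≠ 0)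
    {F F' : Fin n → MvPolynomial (Fin (n + 1)) ℂ}
    (h : ∀ z w, push (monomialMap c e) F z w = push (monomialMap c e) F' z w) : F = F' := by
  ext1 j
  refine MvPolynomial.funext <| IsPolyFun.eq_of_ne_zero ⟨F j, fun _ => rfl⟩ ⟨F' j, fun _ => rfl⟩
    fun v hv => ?_
  obtain ⟨z, w, rfl⟩ : ∃ z w, pt z w = v := ⟨Fin.init v, v (Fin.last n), Fin.snoc_init_self v⟩
  have hz (j : Fin n) : z j ≠ 0 := by simpa using hv j.castSucc
  have hJ := (isUnit_iff_isUnit_det _).mpr (det_jacobian_monomialMap_ne_zero hc he hz).isUnit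
  exact congr_fun (mulVec_injective_iff_isUnit.mpr hJ (h z w)) j

theorem coversTorus_monomialMap (hc : ∀ i, c i ≠ 0) (he : (expMatrix e).det ≠ 0) :
    CoversTorus (monomialMap c e) := by
  intro X hX
  let L (i : Fin n) : ℂ := log (X i / c i)
  let l : Fin n → ℂ := (expMatrix e)⁻¹ *ᵥ L
  have hl : expMatrix e *ᵥ l = L := by
    rw [mulVec_mulVec, mul_nonsing_inv _ he.isUnit, one_mulVec]
  refine ⟨fun j => exp (l j), funext fun i => ?_⟩
  calc
    evalVec (monomialMap c e) (fun j => exp (l j)) i = c i * exp ((expMatrix e *ᵥ l) i) := by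
      simp [evalVec, monomialMap, eval_monomial, Finsupp.prod_fintype, mulVec, dotProduct,
        expMatrix, exp_sum, ← exp_nat_mul]
    _ = X i := by
      rw [hl, exp_log (div_ne_zero (hX i) (hc i)), mul_div_cancel₀ _ (hc i)]

theorem exponent_ne_zero (he : (expMatrix e).det ≠ 0) (i : Fin n) : e i ≠ 0 := fun h =>
  he <| det_eq_zero_of_row_eq_zero i fun j => by simp [expMatrix, h]

theorem exponent_injective (he : (expMatrix e).det ≠ 0) : Function.Injective e := by
  intro i k hik
  by_contra hne
  exact he (det_zero_of_row_eq hne (by ext j; simp [expMatrix, hik]))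

end MonomialMaps

section Restriction

variable {n : ℕ} {K : Type*}

/-- The restriction of a polynomial to the hyperplane `w = 0`. -/
def restrict [CommRing K] (p : MvPolynomial (Fin (n + 1)) K) : MvPolynomial (Fin n) K :=
  bind₁ (pt X 0) p

theorem eval_restrict [CommRing K] (p : MvPolynomial (Fin (n + 1)) K) (z : Fin n → K) :
    eval z (restrict p) = eval (pt z 0) p := by
  have hz : (fun i => eval z (pt (X : Fin n → MvPolynomial (Fin n) K) 0 i)) = pt z 0 := by
    ext i
    induction i using Fin.lastCases <;> simp
  rw [← hz]
  exact eval₂Hom_bind₁ ..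

variable [Field K] {m : ℕ} {c : K} {F : Fin m → MvPolynomial (Fin (m + 1)) K}
  {G : MvPolynomial (Fin (m + 1)) K} {p : NormalParams n K}

theorem HasNormalForm.sum_restrict_mul_pderiv [Infinite K] {x : Fin n → MvPolynomial (Fin m) K}
    (H : HasNormalForm c x F G p) (i : Fin n) :
    ∑ j, restrict (F j) * pderiv j (x i) =
      C (p.a i) + ∑ k, C (p.N i k) * x k + C c * (∑ k, C (p.b' k) * x k) * x i := by
  refine MvPolynomial.funext fun z => ?_
  have h := congr_fun (H z 0).1 i
  simp only [push, mulVec, dotProduct, jacobian, of_apply, evalVec, NormalParams.field, zero_smul,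
    add_zero, mul_zero, zero_add, Pi.add_apply, Pi.smul_apply, smul_eq_mul] at h
  simp only [map_sum, map_mul, map_add, eval_C, eval_restrict, ← h]
  exact Finset.sum_congr rfl fun j _ => mul_comm ..

end Restriction

section Exponents

variable {K : Type*} [Field K] {n : ℕ} {c : K} {F : Fin n → MvPolynomial (Fin (n + 1)) K}
  {G : MvPolynomial (Fin (n + 1)) K} {p : NormalParams n K} {r : Fin n → K}
  {e : Fin n → Fin n →₀ ℕ}

theorem HasNormalForm.coeff_sum_restrict_mul_pderiv [Infinite K]
    (H : HasNormalForm c (monomialMap r e) F G p)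
    (he : ∀ i, e i ≠ 0) {i : Fin n} {m : Fin n →₀ ℕ} (hm : m ≠ 0) (hmi : m.degree ≤ (e i).degree) :
    coeff m (∑ j, restrict (F j) * pderiv j (monomial (e i) (r i))) =
      ∑ k, if e k = m then p.N i k * r k else 0 := by
  classical
  have hsq :
      coeff m (C c * (∑ k, C (p.b' k) * monomial (e k) (r k)) * monomial (e i) (r i)) = 0 := by
    rw [coeff_mul_monomial']
    refine ite_eq_right_iff.mpr fun him => ?_
    have hmi' : m - e i = 0 := by
      rw [← Finsupp.degree_eq_zero_iff]
      have := congr_arg Finsupp.degree (tsub_add_cancel_of_le him)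
      rw [map_add] at this
      lia
    simp [hmi', coeff_C_mul, coeff_sum, coeff_monomial, he]
  have h := congr_arg (coeff m) (H.sum_restrict_mul_pderiv i)
  simp only [monomialMap] at h
  rw [h, coeff_add, coeff_add, coeff_C, if_neg hm.symm, hsq, coeff_sum]
  simp [coeff_C_mul, coeff_monomial]

theorem HasNormalForm.exists_coeff_restrict_ne_zero [Infinite K]
    (H : HasNormalForm c (monomialMap r e) F G p)
    (hr : ∀ i, r i ≠ 0) (he : ∀ i, e i ≠ 0) (hinj : Function.Injective e) {i k : Fin n}
    (hN : p.N i k ≠ 0) (hik : (e k).degree ≤ (e i).degree) :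
    ∃ j d, coeff d (restrict (F j)) ≠ 0 ∧ e k + Finsupp.single j 1 = d + e i := by
  have h := H.coeff_sum_restrict_mul_pderiv he (he k) hik
  simp only [hinj.eq_iff, Finset.sum_ite_eq', Finset.mem_univ, if_true] at h
  obtain ⟨j, -, hj⟩ := Finset.exists_ne_zero_of_sum_ne_zero
    ((coeff_sum ..).symm.trans h ▸ mul_ne_zero hN (hr k))
  exact ⟨j, exists_coeff_ne_zero_of_coeff_mul_pderiv_monomial_ne_zero hj⟩

theorem HasNormalForm.exists_exponent_eq [CharZero K]
    (H : HasNormalForm c (monomialMap r e) F G p) (hr : ∀ i, r i ≠ 0) (he : ∀ i, e i ≠ 0)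
    {i j : Fin n} {b : Fin n →₀ ℕ} (hb : b ≠ 0) (hF : coeff 0 (restrict (F j)) ≠ 0)
    (hi : e i = b + Finsupp.single j 1) : ∃ k, e k = b := by
  by_contra! hk
  have h := H.coeff_sum_restrict_mul_pderiv he hb (i := i) (by simp [hi])
  rw [hi, coeff_sum_mul_pderiv_monomial] at h
  simp only [hk, if_false, Finset.sum_const_zero] at h
  exact mul_ne_zero hF (mul_ne_zero (hr i) (Nat.cast_add_one_ne_zero _)) h

theorem HasNormalForm.constants_eq_zero (H : HasNormalForm c (monomialMap r e) F G p)
    (he : ∀ i, e i ≠ 0) {i : Fin n} (hi : 2 ≤ (e i).degree) : p.a i = 0 ∧ p.b i = 0 := by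
  have h (w : K) : p.a i + w * p.b i = 0 := by
    have hpush : push (monomialMap r e) F 0 w i = 0 := by
      simp only [push, mulVec, dotProduct, jacobian, monomialMap, of_apply,
        eval_zero_pderiv_monomial hi, zero_mul, Finset.sum_const_zero]
    have h := congr_fun (H 0 w).1 i
    simpa [hpush, evalVec_monomialMap_zero r he, NormalParams.field] using h.symm
  have ha : p.a i = 0 := by simpa using h 0
  exact ⟨ha, by simpa [ha] using h 1⟩

end Exponents

section Model

open ComplexConjugate

variable {c : Fin 3 → ℂ} {e : Fin 3 → Fin 3 →₀ ℕ} {F : Fin 3 → MvPolynomial (Fin 4) ℂ}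
  {G : MvPolynomial (Fin 4) ℂ} {p : NormalParams 3 ℂ}

/-- The permutation exchanging the indices of `P` and `Q`: in the coordinates `(P, Q, R)` the
Hermitian form `Φ` is `v ⬝ᵥ twist swapPQ v`. -/
abbrev swapPQ : Equiv.Perm (Fin 3) := Equiv.swap 0 1

theorem swapPQ_involutive : Function.Involutive swapPQ := fun i => by fin_cases i <;> rfl

theorem isInfCR_iff_isInfAut (x : Fin 3 → MvPolynomial (Fin 3) ℂ) :
    IsInfCR (x 0) (x 1) (x 2) F G ↔ IsInfAut swapPQ x F G := by
  have hσ : swapPQ 2 = 2 := rfl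
  have hPhi (z : Fin 3 → ℂ) : evalVec x z ⬝ᵥ twist swapPQ (evalVec x z) =
      Phi (x 0) (x 1) (x 2) z := by
    simp [dotProduct, twist, evalVec, Phi, Fin.sum_univ_three, hσ]
  have hPhiD (z : Fin 3 → ℂ) (w : ℂ) : push x F z w ⬝ᵥ twist swapPQ (evalVec x z) =
      ∑ j, eval (pt z w) (F j) * PhiD (x 0) (x 1) (x 2) j z := by
    simp [push, mulVec, dotProduct, jacobian, twist, evalVec, PhiD, Fin.sum_univ_three, hσ]
    ring
  simp only [IsInfAut, hPhi, hPhiD]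
  rfl

theorem HasNormalForm.linear_one_zero_eq_zero (H : HasNormalForm (2 * I) (monomialMap c e) F G p)
    (hc : ∀ i, c i ≠ 0) (he : (expMatrix e).det ≠ 0)
    (hd : (e 0).degree + (e 1).degree = 2 * (e 2).degree) (hlt : (e 0).degree < (e 1).degree) :
    p.N 1 0 = 0 := by
  by_contra hN
  obtain ⟨j, d, -, hj⟩ := H.exists_coeff_restrict_ne_zero hc (exponent_ne_zero he)
    (exponent_injective he) hN hlt.le
  have hdeg := congr_arg Finsupp.degree hj
  simp only [map_add, Finsupp.degree_single] at hdeg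
  lia

theorem add_ne_two_nsmul (he : (expMatrix e).det ≠ 0) : e 0 + e 1 ≠ 2 • e 2 := by
  intro h
  have hv : ![1, 1, -2] ᵥ* expMatrix e = 0 := by
    ext j
    have hj := congr_arg (Nat.cast : ℕ → ℂ) (DFunLike.congr_fun h j)
    simp only [Finsupp.add_apply, Finsupp.smul_apply, smul_eq_mul, Nat.cast_add, Nat.cast_mul,
      Nat.cast_ofNat] at hj
    simp [vecMul, dotProduct, Fin.sum_univ_three, expMatrix, hj]
  simpa using congr_fun (eq_zero_of_vecMul_eq_zero he hv) 0

theorem HasNormalForm.linear_one_two_eq_zero (H : HasNormalForm (2 * I) (monomialMap c e) F G p)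
    (hp : p.conj swapPQ = p.dual) (hc : ∀ i, c i ≠ 0) (he : (expMatrix e).det ≠ 0)
    (hd : (e 0).degree + (e 1).degree = 2 * (e 2).degree) (hlt : (e 0).degree < (e 1).degree) :
    p.N 1 2 = 0 := by
  by_contra h12
  have h20 : p.N 2 0 ≠ 0 := by
    have hσ : swapPQ 2 = 2 := rfl
    have h : conj (p.N 2 0) = -p.N 1 2 := by
      simpa [NormalParams.conj, NormalParams.dual, hσ] using
        congr_fun₂ (congr_arg NormalParams.N hp) 2 1
    exact fun h0 => h12 (by simpa [h0] using h.symm)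
  have exists_single {i k : Fin 3} (hN : p.N i k ≠ 0) (hki : (e k).degree < (e i).degree) :
      ∃ j, coeff 0 (restrict (F j)) ≠ 0 ∧ e i = e k + Finsupp.single j 1 := by
    obtain ⟨j, d, hF, hj⟩ := H.exists_coeff_restrict_ne_zero hc (exponent_ne_zero he)
      (exponent_injective he) hN hki.le
    have hdeg := congr_arg Finsupp.degree hj
    simp only [map_add, Finsupp.degree_single] at hdeg
    obtain rfl : d = 0 := d.degree_eq_zero_iff.mp (by lia)
    exact ⟨j, hF, by rw [hj, zero_add]⟩
  obtain ⟨j, -, hj⟩ := exists_single h12 (by lia)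
  obtain ⟨i, hF, hi⟩ := exists_single h20 (by lia)
  obtain ⟨k, hk⟩ := H.exists_exponent_eq hc (exponent_ne_zero he) (b := e 0 + Finsupp.single j 1)
    (by simp) hF (i := 1) (by rw [hj, hi, add_right_comm])
  have hdi := congr_arg Finsupp.degree hi
  have hdk := congr_arg Finsupp.degree hk
  simp only [map_add, Finsupp.degree_single] at hdi hdk
  obtain rfl : k = 2 := by
    fin_cases k <;> simp only [Fin.mk_one, Fin.zero_eta, Fin.reduceFinMk] at hdk ⊢ <;> lia
  exact add_ne_two_nsmul he (by rw [hj, hk, ← add_assoc, add_right_comm, ← hk, two_nsmul])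

end Model

section ParameterCount

open ComplexConjugate

/-- The real parameters on which the normal form of an infinitesimal automorphism depends when the
degrees of `P` and `Q` differ. -/
abbrev Params : Type := (Fin 4 → ℂ) × (Fin 5 → ℝ)

theorem rank_params : Module.rank ℝ Params = 13 := by
  rw [← Module.finrank_eq_rank, Module.finrank_prod, Module.finrank_pi_fintype]
  simp [Complex.finrank_real_complex]

/-- The normal form with real parameters `v`: the solution of `p.conj swapPQ = p.dual` in which only
the component along `P` is allowed a constant part and terms linear in the other coordinates. -/
def Params.toNormal (v : Params) : NormalParams 3 ℂ where
  a := ![v.1 0, 0, 0]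
  b := ![v.1 1, 0, 0]
  a' := ![0, conj (v.1 0), 0]
  b' := ![0, conj (v.1 1), 0]
  N := !![v.1 2, I * v.2 4, v.1 3;
          0, v.2 2 - conj (v.1 2), 0;
          0, -conj (v.1 3), v.2 2 / 2 + I * v.2 3]
  ν := v.2 0
  γ := v.2 1
  κ := v.2 2

theorem Params.toNormal_conj (v : Params) : v.toNormal.conj swapPQ = v.toNormal.dual := by
  have hσ : swapPQ 2 = 2 := rfl
  ext i j
  case N =>
    fin_cases i <;> fin_cases j <;>
      simp [toNormal, NormalParams.conj, NormalParams.dual, hσ, map_ofNat]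
    ring
  case ν | γ | κ => simp [toNormal, NormalParams.conj, NormalParams.dual]
  all_goals fin_cases i <;> simp [toNormal, NormalParams.conj, NormalParams.dual, twist, hσ]

theorem eq_half_add_I_mul_im_of_conj_eq_sub {a κ : ℂ} (h : conj a = κ - a) :
    a = κ / 2 + I * a.im := by
  have him := sub_conj a
  push_cast at him
  linear_combination (1 / 2 : ℂ) * (h + him)

theorem NormalParams.exists_params_toNormal_eq {p : NormalParams 3 ℂ}
    (hp : p.conj swapPQ = p.dual) (h₁ : p.a 1 = 0 ∧ p.b 1 = 0) (h₂ : p.a 2 = 0 ∧ p.b 2 = 0)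
    (h10 : p.N 1 0 = 0) (h12 : p.N 1 2 = 0) : ∃ v : Params, v.toNormal = p := by
  have hσ : swapPQ 2 = 2 := rfl
  have ha' : twist swapPQ p.a = p.a' := congr_arg NormalParams.a hp
  have hb' : twist swapPQ p.b = p.b' := congr_arg NormalParams.b hp
  have hN (i j : Fin 3) : conj (p.N (swapPQ i) (swapPQ j)) = (p.κ • 1 - p.Nᵀ) i j :=
    congr_fun₂ (congr_arg NormalParams.N hp) i j
  obtain ⟨ν, hν⟩ := conj_eq_iff_real.mp (congr_arg NormalParams.ν hp)
  obtain ⟨γ, hγ⟩ := conj_eq_iff_real.mp (congr_arg NormalParams.γ hp)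
  obtain ⟨κ, hκ⟩ := conj_eq_iff_real.mp (congr_arg NormalParams.κ hp)
  have h01 : p.N 0 1 = I * (p.N 0 1).im := by
    simpa using eq_half_add_I_mul_im_of_conj_eq_sub (κ := 0) (by simpa using hN 1 0)
  have h11 : conj (p.N 0 0) = κ - p.N 1 1 := by simpa [hκ] using hN 1 1
  have h21 : conj (p.N 0 2) = -p.N 2 1 := by simpa [hσ] using hN 1 2
  have h20 : p.N 2 0 = 0 := by simpa [hσ, h12] using hN 2 1
  have h22 : p.N 2 2 = κ / 2 + I * (p.N 2 2).im :=
    eq_half_add_I_mul_im_of_conj_eq_sub (by simpa [hσ, hκ] using hN 2 2)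
  refine ⟨(![p.a 0, p.b 0, p.N 0 0, p.N 0 2], ![ν, γ, κ, (p.N 2 2).im, (p.N 0 1).im]), ?_⟩
  ext i j
  case N =>
    fin_cases i <;> fin_cases j <;>
      simp [Params.toNormal, ← h01, ← h22, h10, h11, h12, h20, h21]
  case ν | γ | κ => simp [Params.toNormal, hν, hγ, hκ]
  case a' => rw [← ha']; fin_cases i <;> simp [Params.toNormal, twist, hσ, h₁, h₂]
  case b' => rw [← hb']; fin_cases i <;> simp [Params.toNormal, twist, hσ, h₁, h₂]
  all_goals fin_cases i <;> simp [Params.toNormal, h₁, h₂]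

theorem Params.toNormal_injective : Function.Injective Params.toNormal := by
  intro u v h
  have hN (i j : Fin 3) : u.toNormal.N i j = v.toNormal.N i j := by rw [h]
  have ha : u.toNormal.a 0 = v.toNormal.a 0 := by rw [h]
  have hb : u.toNormal.b 0 = v.toNormal.b 0 := by rw [h]
  have hν : u.2 0 = v.2 0 := ofReal_injective (congr_arg NormalParams.ν h)
  have hγ : u.2 1 = v.2 1 := ofReal_injective (congr_arg NormalParams.γ h)
  have hκ : u.2 2 = v.2 2 := ofReal_injective (congr_arg NormalParams.κ h)
  have h01 : u.2 4 = v.2 4 := by simpa [toNormal] using hN 0 1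
  have h22 : u.2 3 = v.2 3 := by simpa [toNormal, hκ] using hN 2 2
  ext i
  · fin_cases i
    exacts [ha, hb, hN 0 0, hN 0 2]
  · fin_cases i
    exacts [hν, hγ, hκ, h22, h01]

end ParameterCount

section DimensionBounds

variable {m n : ℕ}

/-- The values, at the points `(z, w)`, of vector fields with `n + 1` components. -/
abbrev FieldValues (m n : ℕ) : Type := (Fin m → ℂ) → ℂ → (Fin n → ℂ) × ℂ

theorem eval_real_smul {τ : Type*} (t : ℝ) (p : MvPolynomial τ ℂ) (v : τ → ℂ) :
    eval v (t • p) = t * eval v p := by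
  rw [← Complex.coe_smul, smul_eval]

/-- The values of the push-forward of a polynomial vector field by the map `(z, w) ↦ (x z, w)`. -/
def pushValues (x : Fin n → MvPolynomial (Fin m) ℂ) :
    ((Fin m → MvPolynomial (Fin (m + 1)) ℂ) × MvPolynomial (Fin (m + 1)) ℂ) →ₗ[ℝ]
      FieldValues m n where
  toFun Xf z w := (push x Xf.1 z w, eval (pt z w) Xf.2)
  map_add' Xf Yf := by
    refine funext₂ fun z w => Prod.ext (funext fun i => ?_) ?_ <;>
      simp [push, evalVec, mulVec, dotProduct, mul_add, Finset.sum_add_distrib]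
  map_smul' t Xf := by
    refine funext₂ fun z w => Prod.ext (funext fun i => ?_) ?_ <;>
      simp [push, evalVec, mulVec, dotProduct, eval_real_smul, mul_left_comm, Finset.mul_sum]

/-- The values, at the points `(x z, w)`, of the vector fields in normal form. -/
def normalValues (x : Fin 3 → MvPolynomial (Fin 3) ℂ) : Params →ₗ[ℝ] FieldValues 3 3 where
  toFun v z w := (v.toNormal.field (2 * I) (evalVec x z) w, v.toNormal.last (2 * I) (evalVec x z) w)
  map_add' u v := by
    refine funext₂ fun z w => Prod.ext (funext fun i => ?_) ?_
    · fin_cases i <;>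
        simp [NormalParams.field_apply, Params.toNormal, dotProduct, Fin.sum_univ_three] <;> ring
    · simp [NormalParams.last, Params.toNormal, dotProduct, Fin.sum_univ_three]
      ring
  map_smul' t v := by
    refine funext₂ fun z w => Prod.ext (funext fun i => ?_) ?_
    · fin_cases i <;>
        simp [NormalParams.field_apply, Params.toNormal, dotProduct, Fin.sum_univ_three] <;> ring
    · simp [NormalParams.last, Params.toNormal, dotProduct, Fin.sum_univ_three]
      ring

theorem hasNormalForm_toNormal_iff {x : Fin 3 → MvPolynomial (Fin 3) ℂ}
    {F : Fin 3 → MvPolynomial (Fin 4) ℂ} {G : MvPolynomial (Fin 4) ℂ} {v : Params} :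
    HasNormalForm (2 * I) x F G v.toNormal ↔ pushValues x (F, G) = normalValues x v := by
  simp only [HasNormalForm, funext_iff, Prod.ext_iff]
  rfl

theorem pushValues_injective {c : Fin n → ℂ} {e : Fin n → Fin n →₀ ℕ} (hc : ∀ i, c i ≠ 0)
    (he : (expMatrix e).det ≠ 0) : Function.Injective (pushValues (monomialMap c e)) := by
  rintro ⟨F, G⟩ ⟨F', G'⟩ h
  have hpush (z : Fin n → ℂ) (w : ℂ) := Prod.ext_iff.mp (congr_fun₂ h z w)
  refine Prod.ext (eq_of_push_monomialMap_eq hc he fun z w => (hpush z w).1) ?_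
  refine MvPolynomial.funext fun v => ?_
  rw [← Fin.snoc_init_self v]
  exact (hpush _ _).2

theorem normalValues_injective {x : Fin 3 → MvPolynomial (Fin 3) ℂ} (hx : CoversTorus x) :
    Function.Injective (normalValues x) := by
  refine fun u v h => Params.toNormal_injective ?_
  have hval (z : Fin 3 → ℂ) (w : ℂ) := Prod.ext_iff.mp (congr_fun₂ h z w)
  exact hx.normalParams_eq (by simp) (fun z w => (hval z w).1) fun z w => (hval z w).2

section Rank

universe u

variable {k : Type*} {U V W : Type u} [Field k] [AddCommGroup U] [Module k U]
  [AddCommGroup V] [Module k V] [AddCommGroup W] [Module k W]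
  {J : W →ₗ[k] U} {T : V →ₗ[k] U} {s : Set W}

theorem rank_span_le_of_forall_mem_range (hJ : Function.Injective J)
    (h : ∀ w ∈ s, J w ∈ LinearMap.range T) :
    Module.rank k (Submodule.span k s) ≤ Module.rank k V := by
  rw [(Submodule.equivMapOfInjective J hJ _).rank_eq, Submodule.map_span]
  exact (Submodule.rank_mono (Submodule.span_le.mpr (Set.image_subset_iff.mpr h))).trans
    (rank_range_le T)

theorem rank_le_rank_span_of_forall_mem_map (hT : Function.Injective T)
    (h : ∀ v, T v ∈ (Submodule.span k s).map J) :
    Module.rank k V ≤ Module.rank k (Submodule.span k s) :=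
  (LinearMap.rank_le_of_injective (T.codRestrict _ h)
    fun _ _ huv => hT (congr_arg Subtype.val huv)).trans (rank_map_le J _)

theorem exists_mem_ne_zero_of_rank_span_pos (h : 0 < Module.rank k (Submodule.span k s)) :
    ∃ w ∈ s, w ≠ 0 := by
  by_contra! hs
  rw [Submodule.span_eq_bot.mpr hs, rank_bot] at h
  exact lt_irrefl _ h

end Rank

variable {c : Fin 3 → ℂ} {e : Fin 3 → Fin 3 →₀ ℕ}

theorem HasNormalForm.mem_gSet {x : Fin 3 → MvPolynomial (Fin 3) ℂ}
    {F : Fin 3 → MvPolynomial (Fin 4) ℂ} {G : MvPolynomial (Fin 4) ℂ} {v : Params}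
    (hx : CoversTorus x) (hx0 : evalVec x 0 = 0)
    (H : HasNormalForm (2 * I) x F G v.toNormal) : (F, G) ∈ gSet (x 0) (x 1) (x 2) :=
  (isInfCR_iff_isInfAut x).mpr <| (isInfAut_iff_exists_hasNormalForm swapPQ_involutive hx hx0).mpr
    ⟨_, H, v.toNormal_conj⟩

theorem rank_span_gSet_le_of_degree_lt (hc : ∀ i, c i ≠ 0) (he : (expMatrix e).det ≠ 0)
    (hd : (e 0).degree + (e 1).degree = 2 * (e 2).degree) (h2 : 2 ≤ (e 2).degree)
    (hlt : (e 0).degree < (e 1).degree) :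
    Module.rank ℝ (Submodule.span ℝ (gSet (monomialMap c e 0) (monomialMap c e 1)
      (monomialMap c e 2))) ≤ 13 := by
  rw [← rank_params]
  refine rank_span_le_of_forall_mem_range (pushValues_injective hc he)
    (T := normalValues (monomialMap c e)) ?_
  rintro ⟨F, G⟩ hFG
  have he0 := exponent_ne_zero he
  obtain ⟨p, H, hp⟩ := (isInfAut_iff_exists_hasNormalForm swapPQ_involutive
    (coversTorus_monomialMap hc he) (evalVec_monomialMap_zero c he0)).mp
      ((isInfCR_iff_isInfAut _).mp hFG)
  obtain ⟨v, rfl⟩ := p.exists_params_toNormal_eq hp (H.constants_eq_zero he0 (i := 1) (by lia))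
    (H.constants_eq_zero he0 h2) (H.linear_one_zero_eq_zero hc he hd hlt)
    (H.linear_one_two_eq_zero hp hc he hd hlt)
  exact ⟨v, (hasNormalForm_toNormal_iff.mp H).symm⟩

end DimensionBounds

section Rigid

variable {n : ℕ} {K : Type*} [CommRing K]

/-- A vector field not depending on `w`, regarded as a vector field in the variables `(z, w)`. -/
def rigid (f : Fin n → MvPolynomial (Fin n) K) (j : Fin n) : MvPolynomial (Fin (n + 1)) K :=
  rename Fin.castSucc (f j)

theorem eval_rigid (f : Fin n → MvPolynomial (Fin n) K) (j : Fin n) (z : Fin n → K) (w : K) :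
    eval (pt z w) (rigid f j) = eval z (f j) := by
  rw [rigid, eval_rename]
  congr 2
  ext i
  exact pt_castSucc ..

theorem restrict_rigid (f : Fin n → MvPolynomial (Fin n) K) (j : Fin n) :
    restrict (rigid f j) = f j := by
  have hX : pt X 0 ∘ Fin.castSucc = (X : Fin n → MvPolynomial (Fin n) K) :=
    funext fun i => pt_castSucc ..
  rw [restrict, rigid, bind₁_rename, hX, bind₁_X_left, AlgHom.id_apply]

theorem push_rigid (x f : Fin n → MvPolynomial (Fin n) K) (z : Fin n → K) (w : K) :
    push x (rigid f) z w = jacobian x z *ᵥ evalVec f z :=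
  congr_arg _ (funext fun j => eval_rigid f j z w)

theorem eq_zero_of_rigid_eq_zero {f : Fin n → MvPolynomial (Fin n) K} (hf : rigid f = 0) :
    f = 0 := by
  ext1 j
  rw [← restrict_rigid f j, hf, Pi.zero_apply, restrict, map_zero, Pi.zero_apply]

end Rigid

section RigidAutomorphisms

variable {c : Fin 3 → ℂ} {e : Fin 3 → Fin 3 →₀ ℕ} {d : ℕ} {f : Fin 3 → MvPolynomial (Fin 3) ℂ}
  {P Q R : MvPolynomial (Fin 3) ℂ}

theorem rigid_mem_gSet (hf : f ∈ gcSet P Q R d) : (rigid f, 0) ∈ gSet P Q R := by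
  intro z u
  simp only [← pt.eq_1, eval_rigid, map_zero, zero_div, zero_sub, neg_re, neg_eq_zero]
  exact hf.2 z

theorem two_le_degree_of_mem_gcSet (hf : f ∈ gcSet P Q R d) {j : Fin 3} {s : Fin 3 →₀ ℕ}
    (hs : coeff s (f j) ≠ 0) : 2 ≤ s.degree :=
  (hf.1 j s (mem_support_iff.mpr hs)).1

theorem degree_ne_of_mem_gcSet (hc : ∀ i, c i ≠ 0) (he : (expMatrix e).det ≠ 0)
    (hd : (e 0).degree + (e 1).degree = 2 * (e 2).degree) (h2 : 2 ≤ (e 2).degree)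
    (hf : f ∈ gcSet (monomialMap c e 0) (monomialMap c e 1) (monomialMap c e 2) d) (hf0 : f ≠ 0) :
    (e 0).degree ≠ (e 1).degree := by
  intro heq
  have he0 := exponent_ne_zero he
  have hdeg (i : Fin 3) : (e i).degree = (e 2).degree := by
    fin_cases i <;> simp only [Fin.mk_one, Fin.zero_eta, Fin.reduceFinMk] <;> lia
  obtain ⟨p, H, hp⟩ := (isInfAut_iff_exists_hasNormalForm swapPQ_involutive
    (coversTorus_monomialMap hc he) (evalVec_monomialMap_zero c he0)).mp
      ((isInfCR_iff_isInfAut _).mp (rigid_mem_gSet hf))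
  have hab (i : Fin 3) := H.constants_eq_zero he0 (i := i) (h2.trans_eq (hdeg i).symm)
  have ha : p.a = 0 := funext fun i => (hab i).1
  have hb' : p.b' = 0 := by
    rw [← show twist swapPQ p.b = p.b' from congr_arg NormalParams.b hp]
    exact funext fun i => by rw [twist, (hab _).2, map_zero, Pi.zero_apply]
  have hN : p.N = 0 := by
    ext i k
    by_contra hne
    obtain ⟨j, s, hs, hjs⟩ := H.exists_coeff_restrict_ne_zero hc he0 (exponent_injective he) hne
      ((hdeg k).trans (hdeg i).symm).le
    rw [restrict_rigid] at hs
    have hsd := congr_arg Finsupp.degree hjs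
    simp only [map_add, Finsupp.degree_single, hdeg] at hsd
    have := two_le_degree_of_mem_gcSet hf hs
    lia
  refine hf0 (eq_zero_of_rigid_eq_zero (eq_of_push_monomialMap_eq hc he fun z w => ?_))
  calc
    push (monomialMap c e) (rigid f) z w = push (monomialMap c e) (rigid f) z 0 := by
      rw [push_rigid, push_rigid]
    _ = 0 := by simp [(H z 0).1, NormalParams.field, ha, hb', hN]
    _ = push (monomialMap c e) 0 z w := by
      ext i
      simp [push, evalVec, mulVec, dotProduct]

end RigidAutomorphisms

section LowerBound

open ComplexConjugate

variable {c : Fin 3 → ℂ} {e : Fin 3 → Fin 3 →₀ ℕ} {d : ℕ} {f : Fin 3 → MvPolynomial (Fin 3) ℂ}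

theorem push_monomialMap_of_eval_eq_mul {n : ℕ} (c : Fin n → ℂ) (e : Fin n → Fin n →₀ ℕ)
    {F : Fin n → MvPolynomial (Fin (n + 1)) ℂ} {z y : Fin n → ℂ} {w : ℂ}
    (hF : ∀ j, eval (pt z w) (F j) = z j * y j) :
    push (monomialMap c e) F z w = diagonal (evalVec (monomialMap c e) z) *ᵥ expMatrix e *ᵥ y := by
  have hzy : evalVec F (pt z w) = diagonal z *ᵥ y := funext fun j => by
    rw [mulVec_diagonal]
    exact hF j
  rw [push, hzy, mulVec_mulVec, jacobian_monomialMap_mul_diagonal, mulVec_mulVec]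

theorem exists_hasNormalForm_diagonal {n : ℕ} (r : Fin n → ℂ) {e : Fin n → Fin n →₀ ℕ}
    (he : (expMatrix e).det ≠ 0) (c : ℂ) (l : Fin n → ℂ) (ν γ κ : ℂ) :
    ∃ (F : Fin n → MvPolynomial (Fin (n + 1)) ℂ) (G : MvPolynomial (Fin (n + 1)) ℂ) (y : Fin n → ℂ),
      HasNormalForm c (monomialMap r e) F G ⟨0, 0, 0, 0, diagonal l, ν, γ, κ⟩ ∧
        ∀ j, restrict (F j) = C (y j) * X j := by
  let y := (expMatrix e)⁻¹ *ᵥ l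
  let s := (expMatrix e)⁻¹ *ᵥ 1
  have hinv (v : Fin n → ℂ) : expMatrix e *ᵥ (expMatrix e)⁻¹ *ᵥ v = v := by
    rw [mulVec_mulVec, mul_nonsing_inv _ he.isUnit, one_mulVec]
  refine ⟨fun j => X j.castSucc * (C (y j) + C (ν * s j) * X (Fin.last n)),
    C γ + C κ * X (Fin.last n) + C ν * X (Fin.last n) ^ 2, y, fun z w => ⟨?_, ?_⟩, fun j => ?_⟩
  · rw [push_monomialMap_of_eval_eq_mul r e (y := y + (ν * w) • s), mulVec_add, mulVec_smul, hinv,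
      hinv]
    · ext i
      simp [NormalParams.field_apply, mulVec_diagonal]
      ring
    · intro j
      simp only [map_mul, map_add, eval_X, eval_C, pt_castSucc, pt_last, Pi.add_apply,
        Pi.smul_apply, smul_eq_mul]
      ring
  · simp [NormalParams.last]
  · simp [restrict, mul_comm]

/-- The parameters of the infinitesimal automorphisms which are diagonal in the coordinates `z`. -/
def diagParams : (ℂ × (Fin 4 → ℝ)) →ₗ[ℝ] Params where
  toFun u := (![0, 0, u.1, 0], ![u.2 0, u.2 1, u.2 2, u.2 3, 0])
  map_add' u v := by ext i <;> fin_cases i <;> simp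
  map_smul' t v := by ext i <;> fin_cases i <;> simp

theorem diagParams_injective : Function.Injective diagParams := by
  intro u v h
  have hfst := congr_arg Prod.fst h
  have hsnd := congr_arg Prod.snd h
  ext i
  · exact congr_fun hfst 2
  · fin_cases i
    exacts [congr_fun hsnd 0, congr_fun hsnd 1, congr_fun hsnd 2, congr_fun hsnd 3]

theorem exists_hasNormalForm_diagParams (he : (expMatrix e).det ≠ 0) (u : ℂ × (Fin 4 → ℝ)) :
    ∃ (F : Fin 3 → MvPolynomial (Fin 4) ℂ) (G : MvPolynomial (Fin 4) ℂ) (y : Fin 3 → ℂ),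
      HasNormalForm (2 * I) (monomialMap c e) F G (diagParams u).toNormal ∧
        ∀ j, restrict (F j) = C (y j) * X j := by
  let l : Fin 3 → ℂ := ![u.1, u.2 2 - conj u.1, u.2 2 / 2 + I * u.2 3]
  have hu : (diagParams u).toNormal = ⟨0, 0, 0, 0, diagonal l, u.2 0, u.2 1, u.2 2⟩ := by
    ext i j
    case N => fin_cases i <;> fin_cases j <;> simp [diagParams, Params.toNormal, l]
    case ν | γ | κ => simp [diagParams, Params.toNormal]
    all_goals fin_cases i <;> simp [diagParams, Params.toNormal]
  rw [hu]
  exact exists_hasNormalForm_diagonal c he ..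

theorem eq_zero_of_C_mul_X_add_C_mul_eq_zero {n : ℕ} {K : Type*} [Field K]
    {f : Fin n → MvPolynomial (Fin n) K} (hf : ∀ j s, coeff s (f j) ≠ 0 → 2 ≤ s.degree)
    (hf0 : f ≠ 0) {y : Fin n → K} {t : K} (h : ∀ j, C (y j) * X j + C t * f j = 0) : t = 0 := by
  obtain ⟨j, hj⟩ := Function.ne_iff.mp hf0
  obtain ⟨s, hs⟩ := ne_zero_iff.mp hj
  have hs1 : Finsupp.single j 1 ≠ s := by
    rintro rfl
    have := hf j _ hs
    rw [Finsupp.degree_single] at this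
    lia
  have hcoeff := congr_arg (coeff s) (h j)
  rw [coeff_add, coeff_C_mul, coeff_C_mul, coeff_X, if_neg hs1, mul_zero, zero_add,
    coeff_zero] at hcoeff
  exact (mul_eq_zero.mp hcoeff).resolve_right hs

theorem eq_zero_of_normalValues_diagParams_add_smul (hc : ∀ i, c i ≠ 0)
    (he : (expMatrix e).det ≠ 0) (hf : ∀ j s, coeff s (f j) ≠ 0 → 2 ≤ s.degree) (hf0 : f ≠ 0)
    {u : ℂ × (Fin 4 → ℝ)} {t : ℝ}
    (h : normalValues (monomialMap c e) (diagParams u) +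
      t • pushValues (monomialMap c e) (rigid f, 0) = 0) : t = 0 := by
  obtain ⟨F, G, y, H, hF⟩ := exists_hasNormalForm_diagParams (c := c) he u
  rw [← hasNormalForm_toNormal_iff.mp H, ← map_smul, ← map_add] at h
  have hfield := congr_arg Prod.fst (pushValues_injective hc he (h.trans (map_zero _).symm))
  refine ofReal_eq_zero.mp (eq_zero_of_C_mul_X_add_C_mul_eq_zero (y := y) hf hf0 fun j => ?_)
  refine MvPolynomial.funext fun z => ?_
  have hj := congr_arg (eval (pt z 0)) (congr_fun hfield j)
  rw [← hF]
  simpa [eval_restrict, eval_real_smul, eval_rigid] using hj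

theorem seven_le_rank_span_gSet (hc : ∀ i, c i ≠ 0) (he : (expMatrix e).det ≠ 0)
    (hf : f ∈ gcSet (monomialMap c e 0) (monomialMap c e 1) (monomialMap c e 2) d) (hf0 : f ≠ 0) :
    7 ≤ Module.rank ℝ (Submodule.span ℝ
      (gSet (monomialMap c e 0) (monomialMap c e 1) (monomialMap c e 2))) := by
  let x := monomialMap c e
  have hx : CoversTorus x := coversTorus_monomialMap hc he
  let T := (normalValues x ∘ₗ diagParams).coprod
    (LinearMap.toSpanSingleton ℝ _ (pushValues x (rigid f, 0)))
  have hT : Function.Injective T := by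
    refine (injective_iff_map_eq_zero T).mpr ?_
    rintro ⟨u, t⟩ h
    obtain rfl : t = 0 := eq_zero_of_normalValues_diagParams_add_smul hc he
      (fun _ _ => two_le_degree_of_mem_gcSet hf) hf0 h
    have hu : normalValues x (diagParams u) = 0 := by simpa [T] using h
    have hu0 := normalValues_injective hx (hu.trans (map_zero (normalValues x)).symm)
    rw [diagParams_injective (hu0.trans (map_zero diagParams).symm), Prod.mk_zero_zero]
  have hmem (ut : (ℂ × (Fin 4 → ℝ)) × ℝ) :
      T ut ∈ (Submodule.span ℝ (gSet (x 0) (x 1) (x 2))).map (pushValues x) := by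
    obtain ⟨F, G, -, H, -⟩ := exists_hasNormalForm_diagParams (c := c) he ut.1
    have hFG := H.mem_gSet hx (evalVec_monomialMap_zero c (exponent_ne_zero he))
    exact add_mem ⟨_, Submodule.subset_span hFG, hasNormalForm_toNormal_iff.mp H⟩
      (Submodule.smul_mem _ _
        (Submodule.mem_map_of_mem (Submodule.subset_span (rigid_mem_gSet hf))))
  calc
    (7 : Cardinal) = Module.rank ℝ ((ℂ × (Fin 4 → ℝ)) × ℝ) := by
      rw [← Module.finrank_eq_rank, Module.finrank_prod, Module.finrank_prod]
      simp [Complex.finrank_real_complex]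
    _ ≤ _ := rank_le_rank_span_of_forall_mem_map hT hmem

end LowerBound

section UpperBound

theorem Phi_comm (P Q R : MvPolynomial (Fin 3) ℂ) (z : Fin 3 → ℂ) : Phi P Q R z = Phi Q P R z := by
  simp only [Phi]
  ring

theorem PhiD_comm (P Q R : MvPolynomial (Fin 3) ℂ) (j : Fin 3) (z : Fin 3 → ℂ) :
    PhiD P Q R j z = PhiD Q P R j z := by
  simp only [PhiD]
  ring

theorem gSet_comm (P Q R : MvPolynomial (Fin 3) ℂ) : gSet P Q R = gSet Q P R := by
  ext A
  simp only [gSet, Set.mem_ofPred_eq, IsInfCR, Phi_comm P Q R, PhiD_comm P Q R]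

theorem det_expMatrix_comp {n : ℕ} (e : Fin n → Fin n →₀ ℕ) (σ : Equiv.Perm (Fin n)) :
    (expMatrix (e ∘ σ)).det = σ.sign * (expMatrix e).det :=
  det_permute σ (expMatrix e)

theorem rank_span_gSet_le_of_degree_ne {c : Fin 3 → ℂ} {e : Fin 3 → Fin 3 →₀ ℕ}
    (hc : ∀ i, c i ≠ 0) (he : (expMatrix e).det ≠ 0)
    (hd : (e 0).degree + (e 1).degree = 2 * (e 2).degree) (h2 : 2 ≤ (e 2).degree)
    (hne : (e 0).degree ≠ (e 1).degree) :
    Module.rank ℝ (Submodule.span ℝ (gSet (monomialMap c e 0) (monomialMap c e 1)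
      (monomialMap c e 2))) ≤ 13 := by
  rcases hne.lt_or_gt with hlt | hlt
  · exact rank_span_gSet_le_of_degree_lt hc he hd h2 hlt
  · rw [gSet_comm]
    have he' : (expMatrix (e ∘ swapPQ)).det ≠ 0 := by
      rw [det_expMatrix_comp]
      exact mul_ne_zero (Int.cast_ne_zero.mpr (Units.ne_zero _)) he
    exact rank_span_gSet_le_of_degree_lt (c := c ∘ swapPQ) (e := e ∘ swapPQ) (fun i => hc _) he'
      ((add_comm _ _).trans hd) h2 hlt

end UpperBound

section Exponents

variable (a b g : Fin 3 → ℕ)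

/-- The exponents of a triple of monomials, in the form expected by `monomialMap`. -/
def exponents (i : Fin 3) : Fin 3 →₀ ℕ := Finsupp.equivFunOnFinite.symm (![a, b, g] i)

theorem mon_eq_monomial (c : ℂ) :
    mon c a = monomial (Finsupp.equivFunOnFinite.symm a) c := by
  rw [monomial_eq, Finsupp.prod_fintype _ _ fun _ => pow_zero _, Fin.prod_univ_three]
  simp only [mon, Finsupp.equivFunOnFinite_symm_apply_apply, mul_assoc]

theorem degE_eq_degree : degE a = (Finsupp.equivFunOnFinite.symm a).degree := by
  rw [Finsupp.degree_eq_sum, Fin.sum_univ_three]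
  rfl

variable {a b g}

theorem det_expMatrix_exponents_ne_zero (h : edet a b g ≠ 0) :
    (expMatrix (exponents a b g)).det ≠ 0 := by
  suffices (expMatrix (exponents a b g)).det = edet a b g from this ▸ Int.cast_ne_zero.mpr h
  rw [edet, ← det_transpose, Int.cast_det]
  congr 1
  ext i j
  fin_cases i <;> fin_cases j <;> simp [expMatrix, exponents]

end Exponents

section MaximalModel

open ComplexConjugate

/-- The triple of monomials `z₁, z₂² z₃, z₂ z₃`, for which all normal forms occur. -/
def maxModel : Fin 3 → MvPolynomial (Fin 3) ℂ := ![X 0, X 1 ^ 2 * X 2, X 1 * X 2]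

theorem maxModel_eq_mon : maxModel = ![mon 1 ![1, 0, 0], mon 1 ![0, 2, 1], mon 1 ![0, 1, 1]] := by
  ext1 i
  fin_cases i <;> simp [maxModel, mon]

theorem edet_maxModel : edet ![1, 0, 0] ![0, 2, 1] ![0, 1, 1] ≠ 0 := by
  simp [edet, det_fin_three]

theorem evalVec_maxModel (z : Fin 3 → ℂ) :
    evalVec maxModel z = ![z 0, z 1 ^ 2 * z 2, z 1 * z 2] := by
  ext i
  fin_cases i <;> simp [evalVec, maxModel]

theorem jacobian_maxModel (z : Fin 3 → ℂ) :
    jacobian maxModel z = !![1, 0, 0; 0, 2 * z 1 * z 2, z 1 ^ 2; 0, z 2, z 1] := by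
  ext i j
  fin_cases i <;> fin_cases j <;> simp [jacobian, maxModel, pderiv_X, mul_comm, mul_assoc]

theorem exists_hasNormalForm_maxModel (v : Params) :
    ∃ (F : Fin 3 → MvPolynomial (Fin 4) ℂ) (G : MvPolynomial (Fin 4) ℂ),
      HasNormalForm (2 * I) maxModel F G v.toNormal := by
  let Z (j : Fin 3) : MvPolynomial (Fin 4) ℂ := X j.castSucc
  let W : MvPolynomial (Fin 4) ℂ := X (Fin.last 3)
  let p := v.toNormal
  refine ⟨![C (p.a 0) + C (p.b 0) * W + C (p.N 0 0) * Z 0 + C (p.N 0 1) * (Z 1 ^ 2 * Z 2) +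
        C (p.N 0 2) * (Z 1 * Z 2) + (C p.ν * W + C (2 * I * p.b' 1) * (Z 1 ^ 2 * Z 2)) * Z 0,
      Z 1 * (C (p.N 1 1 - p.N 2 2) - C (p.N 2 1) * Z 1),
      Z 2 * (C (2 * p.N 2 2 - p.N 1 1) + C p.ν * W + C (2 * p.N 2 1) * Z 1 +
        C (2 * I * p.b' 1) * (Z 1 ^ 2 * Z 2))],
    C p.γ + C p.κ * W + C p.ν * W ^ 2 + (C (2 * I * p.a' 1) + C (2 * I * p.b' 1) * W) *
        (Z 1 ^ 2 * Z 2), fun z w => ⟨?_, ?_⟩⟩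
  · have hZ (j : Fin 3) : eval (pt z w) (Z j) = z j := by rw [eval_X, pt_castSucc]
    have hW : eval (pt z w) W = w := by rw [eval_X, pt_last]
    ext i
    rw [push, jacobian_maxModel, NormalParams.field_apply, evalVec_maxModel]
    fin_cases i <;>
      simp [evalVec, mulVec, dotProduct, Fin.sum_univ_three, hZ, hW, p, Params.toNormal] <;> ring
  · have hZ (j : Fin 3) : eval (pt z w) (Z j) = z j := by rw [eval_X, pt_castSucc]
    have hW : eval (pt z w) W = w := by rw [eval_X, pt_last]
    simp [NormalParams.last, evalVec_maxModel, dotProduct, Fin.sum_univ_three, hZ, hW, p,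
      Params.toNormal]
    ring

theorem rank_span_gSet_maxModel : Module.rank ℝ (Submodule.span ℝ
    (gSet (maxModel 0) (maxModel 1) (maxModel 2))) = 13 := by
  let e := exponents ![1, 0, 0] ![0, 2, 1] ![0, 1, 1]
  have hx : maxModel = monomialMap 1 e := by
    rw [maxModel_eq_mon]
    ext1 i
    fin_cases i <;> exact mon_eq_monomial ..
  have he : (expMatrix e).det ≠ 0 := det_expMatrix_exponents_ne_zero edet_maxModel
  have hc (i : Fin 3) : (1 : Fin 3 → ℂ) i ≠ 0 := one_ne_zero
  have hcov : CoversTorus maxModel := hx ▸ coversTorus_monomialMap hc he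
  have hx0 : evalVec maxModel 0 = 0 := hx ▸ evalVec_monomialMap_zero _ (exponent_ne_zero he)
  refine le_antisymm ?_ ?_
  · rw [hx]
    refine rank_span_gSet_le_of_degree_ne hc he ?_ ?_ ?_ <;>
      simp only [e, exponents, ← degE_eq_degree] <;> decide
  · rw [← rank_params]
    refine rank_le_rank_span_of_forall_mem_map (J := pushValues maxModel)
      (normalValues_injective hcov) fun v => ?_
    obtain ⟨F, G, H⟩ := exists_hasNormalForm_maxModel v
    exact ⟨_, Submodule.subset_span (H.mem_gSet hcov hx0), hasNormalForm_toNormal_iff.mp H⟩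

theorem mem_gcSet_maxModel :
    ![C I * maxModel 1, 0, 0] ∈ gcSet (maxModel 0) (maxModel 1) (maxModel 2) 4 := by
  refine ⟨fun j m hm => ?_, fun z => ?_⟩
  · fin_cases j
    · have hX : C I * maxModel 1 = monomial (Finsupp.equivFunOnFinite.symm ![0, 2, 1]) I := by
        rw [← mon_eq_monomial]
        simp [maxModel, mon, mul_assoc]
      obtain rfl : m = Finsupp.equivFunOnFinite.symm ![0, 2, 1] := by
        simpa [hX, support_monomial] using hm
      rw [Finsupp.sum_fintype _ _ fun _ => rfl, Fin.sum_univ_three]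
      simp
    all_goals simp at hm
  · have hre (q : ℂ) : (I * q * conj q).re = 0 := by
      rw [mul_assoc, mul_conj, I_mul_re, ofReal_im, neg_zero]
    rw [← hre (z 1 ^ 2 * z 2)]
    congr 1
    simp [PhiD, maxModel, Fin.sum_univ_three, pderiv_X]

theorem rank_span_gcSet_maxModel_pos : 0 < Module.rank ℝ (Submodule.span ℝ
    (gcSet (maxModel 0) (maxModel 1) (maxModel 2) 4)) := by
  refine rank_pos_iff_exists_ne_zero.mpr
    ⟨⟨_, Submodule.subset_span mem_gcSet_maxModel⟩, fun h => ?_⟩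
  have h0 := congr_arg (eval 1) (congr_fun (congr_arg Subtype.val h) 0)
  simp [maxModel] at h0

end MaximalModel

/-- For a holomorphically nondegenerate monomial model with
`deg R ≥ 2`: if `dim_ℝ g_c > 0` then `7 ≤ dim_ℝ g ≤ 13`; moreover some such model
attains `dim_ℝ g_c > 0` and `dim_ℝ g = 13`. -/
theorem stmt16 :
    (∀ (cP cQ cR : ℂ) (a b g : Fin 3 → ℕ),
      cP ≠ 0 → cQ ≠ 0 → cR ≠ 0 →
      degE a + degE b = 2 * degE g → 2 ≤ degE g → edet a b g ≠ 0 →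
      0 < Module.rank ℝ ↥(Submodule.span ℝ
          (gcSet (mon cP a) (mon cQ b) (mon cR g) (degE a + degE b))) →
      (7 ≤ Module.rank ℝ ↥(Submodule.span ℝ (gSet (mon cP a) (mon cQ b) (mon cR g))) ∧
        Module.rank ℝ ↥(Submodule.span ℝ (gSet (mon cP a) (mon cQ b) (mon cR g))) ≤ 13)) ∧
    (∃ (cP cQ cR : ℂ) (a b g : Fin 3 → ℕ),
      cP ≠ 0 ∧ cQ ≠ 0 ∧ cR ≠ 0 ∧
      degE a + degE b = 2 * degE g ∧ 2 ≤ degE g ∧ edet a b g ≠ 0 ∧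
      0 < Module.rank ℝ ↥(Submodule.span ℝ
          (gcSet (mon cP a) (mon cQ b) (mon cR g) (degE a + degE b))) ∧
      Module.rank ℝ ↥(Submodule.span ℝ (gSet (mon cP a) (mon cQ b) (mon cR g))) = 13) := by
  refine ⟨fun cP cQ cR a b g hP hQ hR hd h2 hdet hpos => ?_, ?_⟩
  · obtain ⟨f, hf, hf0⟩ := exists_mem_ne_zero_of_rank_span_pos hpos
    let c := ![cP, cQ, cR]
    let e := exponents a b g
    have hc (i : Fin 3) : c i ≠ 0 := by fin_cases i <;> assumption
    have he : (expMatrix e).det ≠ 0 := det_expMatrix_exponents_ne_zero hdet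
    have hP' : mon cP a = monomialMap c e 0 := mon_eq_monomial ..
    have hQ' : mon cQ b = monomialMap c e 1 := mon_eq_monomial ..
    have hR' : mon cR g = monomialMap c e 2 := mon_eq_monomial ..
    simp only [degE_eq_degree] at hd h2
    rw [hP', hQ', hR'] at hf ⊢
    have hne : (e 0).degree ≠ (e 1).degree := degree_ne_of_mem_gcSet hc he hd h2 hf hf0
    exact ⟨seven_le_rank_span_gSet hc he hf hf0, rank_span_gSet_le_of_degree_ne hc he hd h2 hne⟩
  · have hpos := rank_span_gcSet_maxModel_pos
    have h13 := rank_span_gSet_maxModel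
    rw [maxModel_eq_mon] at hpos h13
    exact ⟨1, 1, 1, ![1, 0, 0], ![0, 2, 1], ![0, 1, 1], one_ne_zero, one_ne_zero, one_ne_zero,
      by decide, by decide, edet_maxModel, hpos, h13⟩
end
end

section
/- Let ℓ ≥ 3 be an odd integer and let P = z₁, Q = z₂^ℓ, R = z₂^{(ℓ−1)/2} z₃ (so d = deg P + deg Q = ℓ+1 = 2·deg R and the exponent determinant equals ℓ ≠ 0). Then: (1) for every a ∈ ℝ the field X₁ = i·a·z₂^ℓ ∂/∂z₁ is an infinitesimal CR automorphism of M; (2) for all a, b ∈ ℝ the field X₂ = −(a+ib)·z₂^{(ℓ−1)/2} z₃ ∂/∂z₁ + (a−ib)·z₂^{(ℓ+1)/2} ∂/∂z₃ is an infinitesimal CR automorphism of M; and (3) dim_ℝ g_c = 3. -/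
open MvPolynomial Complex

noncomputable section

/-!
Pair the derivatives of `P, Q, R` along a rigid field `f` with `q = (Q, P, R)`: tangency says that
`Re ∑ i, p_i conj(q_i) = 0`, where `p = (f P, f Q, f R)`. Polarization turns this into
`∑ i, p_i(z) conj(q_i(w)) + q_i(z) conj(p_i(w)) = 0` for independent `z` and `w`, and applying a
system dual to the linearly independent `q_i` shows that it holds exactly when `p = S q` with `S`
skew-Hermitian. For `P = z₁`, `Q = z₂^(m+k)`, `R = z₂^m z₃`, divisibility by powers of `z₂` kills
the `∂/∂z₂` component of `f`, and the absence of linear terms leaves only the corner entries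
`S 0 0 ∈ iℝ` and `S 0 2 = -conj (S 2 0)` of `S`: three real parameters.
-/

open scoped ComplexConjugate

theorem eq_zero_of_forall_eval_sumElim_conj_eq_zero {σ : Type*} {H : MvPolynomial (σ ⊕ σ) ℂ}
    (h : ∀ z : σ → ℂ, eval (Sum.elim z fun i => conj (z i)) H = 0) : H = 0 := by
  -- In the coordinates `x, y` with `z = x + iy`, `w = x - iy`, the locus `w = conj z` is the set
  -- of real points, which is Zariski dense.
  let G : MvPolynomial (σ ⊕ σ) ℂ := bind₁
    (Sum.elim (fun i => X (.inl i) + C I * X (.inr i)) fun i => X (.inl i) - C I * X (.inr i)) H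
  have eval_G (v : σ ⊕ σ → ℂ) : eval v G =
      eval (Sum.elim (fun i => v (.inl i) + I * v (.inr i))
        fun i => v (.inl i) - I * v (.inr i)) H := by
    simp only [G, eval, eval₂Hom_bind₁]
    congr 2
    ext (i | i) <;> simp
  have G_eq_zero : G = 0 := by
    refine funext_set (fun _ => Set.range ((↑) : ℝ → ℂ))
      (fun _ => Set.infinite_range_of_injective ofReal_injective) fun v hv => ?_
    have conj_v (k : σ ⊕ σ) : conj (v k) = v k := by
      obtain ⟨r, hr⟩ := hv k (Set.mem_univ k)
      rw [← hr, conj_ofReal]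
    rw [map_zero, eval_G, ← h fun i => v (.inl i) + I * v (.inr i)]
    simp [conj_v, sub_eq_add_neg]
  refine MvPolynomial.funext fun v => ?_
  have hv := eval_G (Sum.elim (fun i => (v (.inl i) + v (.inr i)) / 2)
    fun i => (v (.inl i) - v (.inr i)) / (2 * I))
  rw [G_eq_zero, map_zero] at hv
  rw [map_zero, hv]
  congr 2
  ext (i | i) <;> simp <;> field_simp <;> ring

theorem sum_conj_eval_smul_eq_zero {σ ι : Type*} [Fintype ι] {p q : ι → MvPolynomial σ ℂ}
    (h : ∀ z, ∑ i, eval z (p i) * conj (eval z (q i)) = 0) (w : σ → ℂ) :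
    ∑ i, conj (eval w (q i)) • p i = 0 := by
  have eval_map_conj (v : σ → ℂ) (f : MvPolynomial σ ℂ) :
      eval (fun i => conj (v i)) (map conj f) = conj (eval v f) := by
    rw [eval_map, eval₂_comp, Function.comp_def]
  have polarized : ∑ i, rename Sum.inl (p i) * rename Sum.inr (map conj (q i)) = 0 :=
    eq_zero_of_forall_eval_sumElim_conj_eq_zero fun z => by
      simpa [eval_rename, Function.comp_def, eval_map_conj] using h z
  refine MvPolynomial.funext fun z => ?_
  have := congrArg (eval (Sum.elim z fun i => conj (w i))) polarized
  simpa [eval_rename, Function.comp_def, eval_map_conj, smul_eval, mul_comm] using this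

theorem conj_apply_of_mem_skewAdjoint {ι : Type*} {S : Matrix ι ι ℂ}
    (hS : S ∈ skewAdjoint (Matrix ι ι ℂ)) (i j : ι) : conj (S i j) = -S j i :=
  Matrix.ext_iff.mpr (skewAdjoint.mem_iff.mp hS) j i

theorem re_sum_mulVec_mul_conj_eq_zero {ι : Type*} [Fintype ι] {S : Matrix ι ι ℂ}
    (hS : S ∈ skewAdjoint (Matrix ι ι ℂ)) (v : ι → ℂ) :
    (∑ i, (∑ j, S i j * v j) * conj (v i)).re = 0 := by
  have conj_eq_neg :
      conj (∑ i, (∑ j, S i j * v j) * conj (v i)) = -∑ i, (∑ j, S i j * v j) * conj (v i) := by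
    simp only [map_sum, map_mul, conj_conj, conj_apply_of_mem_skewAdjoint hS, Finset.sum_mul,
      ← Finset.sum_neg_distrib]
    rw [Finset.sum_comm]
    refine Finset.sum_congr rfl fun i _ => Finset.sum_congr rfl fun j _ => ?_
    ring
  have := congrArg re conj_eq_neg
  rwa [conj_re, neg_re, self_eq_neg] at this

theorem exists_skewAdjoint_of_re_sum_mul_conj_eq_zero {σ ι : Type*} [Fintype ι]
    {p q : ι → MvPolynomial σ ℂ} (hq : LinearIndependent ℂ q)
    (h : ∀ z, (∑ i, eval z (p i) * conj (eval z (q i))).re = 0) :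
    ∃ S ∈ skewAdjoint (Matrix ι ι ℂ), ∀ i, p i = ∑ j, S i j • q j := by
  classical
  have polarized (z : σ → ℂ) :
      ∑ i, conj (eval z (q i)) • p i + ∑ i, conj (eval z (p i)) • q i = 0 := by
    simpa using sum_conj_eval_smul_eq_zero (p := Sum.elim p q) (q := Sum.elim q p)
      (fun w => by
        have := add_conj (∑ i, eval w (p i) * conj (eval w (q i)))
        simpa [h w, mul_comm] using this) z
  obtain ⟨L, hL⟩ := (Fintype.linearCombination ℂ q).exists_leftInverse_of_injective
    (LinearMap.ker_eq_bot.mpr hq.fintypeLinearCombination_injective)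
  have L_sum (c : ι → ℂ) : L (∑ j, c j • q j) = c := LinearMap.congr_fun hL c
  have p_eq (i : ι) : p i = ∑ j, -conj (L (p j) i) • q j := by
    refine MvPolynomial.funext fun z => ?_
    have apply_i := congrFun (congrArg L (polarized z)) i
    rw [map_add, L_sum] at apply_i
    have conj_apply_i := congrArg conj apply_i
    simp only [map_sum, map_smul, map_zero, Pi.add_apply, Finset.sum_apply, Pi.smul_apply,
      Pi.zero_apply, smul_eq_mul, map_add, map_mul, conj_conj] at conj_apply_i
    simp only [map_sum, smul_eval, neg_mul, Finset.sum_neg_distrib, mul_comm (conj (L _ i))]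
    linear_combination conj_apply_i
  have L_p (i : ι) : L (p i) = fun j => -conj (L (p j) i) := by
    conv_lhs => rw [p_eq i, L_sum]
  refine ⟨Matrix.of fun i j => -conj (L (p j) i), skewAdjoint.mem_iff.mpr ?_, p_eq⟩
  ext i j
  simp [L_p i]

theorem mkDerivation_eq_sum_mul_pderiv {σ R : Type*} [Fintype σ] [CommSemiring R]
    (f : σ → MvPolynomial σ R) (p : MvPolynomial σ R) :
    mkDerivation R f p = ∑ j, f j * pderiv j p := by
  classical
  let D : Derivation R (MvPolynomial σ R) (MvPolynomial σ R) := ∑ j, f j • pderiv j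
  have D_apply (p : MvPolynomial σ R) : D p = ∑ j, f j * pderiv j p := by
    simp only [D, ← Derivation.coeFnAddMonoidHom_apply, map_sum, Finset.sum_apply]
    rfl
  have : mkDerivation R f = D :=
    derivation_ext fun i => by simp [D_apply, mkDerivation_X, pderiv_X, Pi.single_apply]
  rw [this, D_apply]

theorem sum_eq_of_isHomogeneous_of_mem_support {σ R : Type*} [CommSemiring R]
    {p : MvPolynomial σ R} {n : ℕ} (hp : p.IsHomogeneous n) {e : σ →₀ ℕ} (he : e ∈ p.support) :
    (e.sum fun _ i => i) = n := by
  by_contra hne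
  exact mem_support_iff.mp he (hp.coeff_eq_zero hne)

theorem eq_zero_of_X_one_pow_dvd {R : Type*} [CommRing R] [IsDomain R] {m : ℕ} {b c : R}
    (h : (X 1 ^ (m + 1) : MvPolynomial (Fin 3) R) ∣ b • X 0 + c • (X 1 ^ m * X 2)) :
    b = 0 ∧ c = 0 := by
  have hb : b = 0 := by
    simpa [smul_eval] using map_dvd (eval ![1, 0, 0]) h
  have X_dvd : (X 1 : MvPolynomial (Fin 3) R) ∣ c • X 2 := by
    rw [hb, zero_smul, zero_add, ← mul_smul_comm, pow_succ] at h
    exact (mul_dvd_mul_iff_left (pow_ne_zero m (X_ne_zero 1))).mp h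
  exact ⟨hb, by simpa [smul_eval] using map_dvd (eval ![0, 0, 1]) X_dvd⟩

section RigidFields

variable {P Q R : MvPolynomial (Fin 3) ℂ}

/-- The rigid field `Σ f_j(z) ∂/∂z_j` is an infinitesimal CR automorphism of `{Im w = Φ(z)}`:
the tangency condition in `gcSet`, without its bounds on degrees. -/
def IsRigidInfCR (P Q R : MvPolynomial (Fin 3) ℂ) (f : Fin 3 → MvPolynomial (Fin 3) ℂ) : Prop :=
  ∀ z : Fin 3 → ℂ, (∑ j, eval z (f j) * PhiD P Q R j z).re = 0

theorem isInfCR_rename_castSucc_iff {f : Fin 3 → MvPolynomial (Fin 3) ℂ} :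
    IsInfCR P Q R (fun j => rename Fin.castSucc (f j)) 0 ↔ IsRigidInfCR P Q R f := by
  have snoc_comp (z : Fin 3 → ℂ) (x : ℂ) : (Fin.snoc z x : Fin 4 → ℂ) ∘ Fin.castSucc = z :=
    funext fun j => Fin.snoc_castSucc (α := fun _ => ℂ) x z j
  simp only [IsInfCR, IsRigidInfCR, eval_rename, snoc_comp, map_zero, zero_div, zero_sub, neg_re,
    neg_eq_zero, forall_const]

theorem sum_eval_mul_PhiD (f : Fin 3 → MvPolynomial (Fin 3) ℂ) (z : Fin 3 → ℂ) :
    ∑ j, eval z (f j) * PhiD P Q R j z =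
      ∑ i, eval z (mkDerivation ℂ f (![P, Q, R] i)) * conj (eval z (![Q, P, R] i)) := by
  simp only [mkDerivation_eq_sum_mul_pderiv, PhiD, Fin.sum_univ_three, Matrix.cons_val, map_add,
    map_mul]
  ring

theorem IsRigidInfCR.of_skewAdjoint {f : Fin 3 → MvPolynomial (Fin 3) ℂ}
    {S : Matrix (Fin 3) (Fin 3) ℂ} (hS : S ∈ skewAdjoint (Matrix (Fin 3) (Fin 3) ℂ))
    (h : ∀ i, mkDerivation ℂ f (![P, Q, R] i) = ∑ j, S i j • ![Q, P, R] j) :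
    IsRigidInfCR P Q R f := fun z => by
  rw [sum_eval_mul_PhiD]
  simpa only [h, map_sum, smul_eval] using
    re_sum_mulVec_mul_conj_eq_zero hS fun j => eval z (![Q, P, R] j)

theorem IsRigidInfCR.exists_skewAdjoint {f : Fin 3 → MvPolynomial (Fin 3) ℂ}
    (hf : IsRigidInfCR P Q R f) (hli : LinearIndependent ℂ ![Q, P, R]) :
    ∃ S ∈ skewAdjoint (Matrix (Fin 3) (Fin 3) ℂ),
      ∀ i, mkDerivation ℂ f (![P, Q, R] i) = ∑ j, S i j • ![Q, P, R] j :=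
  exists_skewAdjoint_of_re_sum_mul_conj_eq_zero hli fun z => by
    rw [← sum_eval_mul_PhiD]
    exact hf z

end RigidFields

section MonomialModel

/-- The fields `i a z₂^(m+k) ∂/∂z₁ - c z₂^m z₃ ∂/∂z₁ + conj(c) z₂^k ∂/∂z₃` with `a` real and `c`
complex, which exhaust `g_c` for `P = z₁`, `Q = z₂^(m+k)`, `R = z₂^m z₃`. -/
def rigidField (m k : ℕ) : ℝ × ℂ →ₗ[ℝ] Fin 3 → MvPolynomial (Fin 3) ℂ where
  toFun v := ![(I * v.1) • X 1 ^ (m + k) + (-v.2) • (X 1 ^ m * X 2), 0, conj v.2 • X 1 ^ k]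
  map_add' v w := by
    ext1 j
    fin_cases j <;> simp [mul_add, add_smul]
    abel
  map_smul' r v := by
    ext1 j
    fin_cases j <;> simp [mul_smul, smul_comm I]

variable {m k : ℕ}

theorem linearIndependent_X_pow_X_X_pow_mul_X (hk : k ≠ 0) :
    LinearIndependent ℂ ![(X 1 ^ (m + k) : MvPolynomial (Fin 3) ℂ), X 0, X 1 ^ m * X 2] := by
  rw [Fintype.linearIndependent_iff]
  intro c hc
  have eval_eq (z : Fin 3 → ℂ) :
      c 0 * z 1 ^ (m + k) + c 1 * z 0 + c 2 * (z 1 ^ m * z 2) = 0 := by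
    simpa [Fin.sum_univ_three, smul_eval] using congrArg (eval z) hc
  have h₀ : c 0 = 0 := by simpa using eval_eq ![0, 1, 0]
  have h₁ : c 1 = 0 := by simpa [hk] using eval_eq ![1, 0, 0]
  have h₂ : c 2 = 0 := by simpa [h₀] using eval_eq ![0, 1, 1]
  simp [Fin.forall_fin_succ, h₀, h₁, h₂]

theorem rigidField_injective : Function.Injective (rigidField m k) := by
  rw [← LinearMap.ker_eq_bot, LinearMap.ker_eq_bot']
  intro v hv
  have eval_eq (j : Fin 3) : eval ![0, 1, 0] (rigidField m k v j) = 0 := by simp [hv]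
  exact Prod.ext (by simpa [rigidField, smul_eval] using eval_eq 0)
    (by simpa [rigidField, smul_eval] using eval_eq 2)

theorem isRigidInfCR_rigidField (v : ℝ × ℂ) :
    IsRigidInfCR (X 0) (X 1 ^ (m + k)) (X 1 ^ m * X 2) (rigidField m k v) := by
  refine .of_skewAdjoint (S := !![I * v.1, 0, -v.2; 0, 0, 0; conj v.2, 0, 0]) ?_ fun i => ?_
  · rw [skewAdjoint.mem_iff]
    ext i j
    fin_cases i <;> fin_cases j <;> simp
  · fin_cases i <;>
      simp [Fin.sum_univ_three, mkDerivation_X, Derivation.leibniz_pow, rigidField, pow_add]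

theorem rigidField_mem_gcSet {d : ℕ} (hm : 1 ≤ m) (hk : 2 ≤ k) (hd : m + k ≤ d) (v : ℝ × ℂ) :
    rigidField m k v ∈ gcSet (X 0) (X 1 ^ (m + k)) (X 1 ^ m * X 2) d := by
  have pow_homogeneous (c : ℂ) (n : ℕ) :
      (c • X 1 ^ n : MvPolynomial (Fin 3) ℂ).IsHomogeneous n := by
    simpa only [smul_eq_C_mul] using (isHomogeneous_X_pow 1 n).C_mul c
  have mul_homogeneous (c : ℂ) :
      (c • (X 1 ^ m * X 2) : MvPolynomial (Fin 3) ℂ).IsHomogeneous (m + 1) := by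
    simpa only [smul_eq_C_mul] using ((isHomogeneous_X_pow 1 m).mul (isHomogeneous_X ℂ 2)).C_mul c
  refine ⟨fun j e he => ?_, isRigidInfCR_rigidField v⟩
  fin_cases j
  · rcases Finset.mem_union.mp (support_add he) with he | he
    · rw [sum_eq_of_isHomogeneous_of_mem_support (pow_homogeneous _ _) he]
      omega
    · rw [sum_eq_of_isHomogeneous_of_mem_support (mul_homogeneous _) he]
      omega
  · simp [rigidField] at he
  · rw [sum_eq_of_isHomogeneous_of_mem_support (pow_homogeneous _ _) he]
    omega

theorem IsRigidInfCR.exists_skewAdjoint_of_coeff_eq_zero {f : Fin 3 → MvPolynomial (Fin 3) ℂ}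
    (hf : IsRigidInfCR (X 0) (X 1 ^ (m + k)) (X 1 ^ m * X 2) f) (hk : 2 ≤ k)
    (hf₀ : coeff (.single 0 1) (f 0) = 0) :
    f 1 = 0 ∧ ∃ S ∈ skewAdjoint (Matrix (Fin 3) (Fin 3) ℂ),
      f 0 = S 0 0 • X 1 ^ (m + k) + S 0 2 • (X 1 ^ m * X 2) ∧
      f 2 = S 2 0 • X 1 ^ k + S 2 2 • X 2 := by
  obtain ⟨S, hS, hfS⟩ := hf.exists_skewAdjoint (linearIndependent_X_pow_X_X_pow_mul_X (by omega))
  have skew := conj_apply_of_mem_skewAdjoint hS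
  have hP : f 0 = S 0 0 • X 1 ^ (m + k) + S 0 1 • X 0 + S 0 2 • (X 1 ^ m * X 2) := by
    simpa [Fin.sum_univ_three, mkDerivation_X] using hfS 0
  have hQ : (m + k) • (X 1 ^ (m + k - 1) * f 1) =
      S 1 0 • X 1 ^ (m + k) + S 1 1 • X 0 + S 1 2 • (X 1 ^ m * X 2) := by
    simpa [Fin.sum_univ_three, mkDerivation_X, Derivation.leibniz_pow] using hfS 1
  have S₀₁ : S 0 1 = 0 := by
    simpa [hP, coeff_X_pow, coeff_mul_X', ← Finsupp.single_add, Finsupp.single_eq_single_iff]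
      using hf₀
  have S₁₀ : S 1 0 = 0 := by simpa [S₀₁] using skew 0 1
  rw [S₁₀, zero_smul, zero_add] at hQ
  have hdvd : (X 1 ^ (m + 1) : MvPolynomial (Fin 3) ℂ) ∣
      S 1 1 • X 0 + S 1 2 • (X 1 ^ m * X 2) := by
    rw [← hQ, ← mul_smul_comm]
    exact (pow_dvd_pow _ (by omega)).mul_right _
  obtain ⟨S₁₁, S₁₂⟩ := eq_zero_of_X_one_pow_dvd hdvd
  have S₂₁ : S 2 1 = 0 := by simpa [S₁₂] using skew 1 2
  have hf₁ : f 1 = 0 := by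
    rw [S₁₁, S₁₂, zero_smul, zero_smul, add_zero, smul_eq_zero_iff_right (by omega)] at hQ
    exact (mul_eq_zero.mp hQ).resolve_left (pow_ne_zero _ (X_ne_zero 1))
  have hR : X 1 ^ m * f 2 = X 1 ^ m * (S 2 0 • X 1 ^ k + S 2 2 • X 2) := by
    simpa [Fin.sum_univ_three, mkDerivation_X, Derivation.leibniz_pow, hf₁, S₂₁, mul_add, pow_add]
      using hfS 2
  exact ⟨hf₁, S, hS, by simpa [S₀₁] using hP, mul_left_cancel₀ (pow_ne_zero m (X_ne_zero 1)) hR⟩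

theorem exists_rigidField_eq {d : ℕ} (hk : 2 ≤ k)
    {f : Fin 3 → MvPolynomial (Fin 3) ℂ}
    (hf : f ∈ gcSet (X 0) (X 1 ^ (m + k)) (X 1 ^ m * X 2) d) :
    ∃ v, rigidField m k v = f := by
  obtain ⟨hdeg, hCR : IsRigidInfCR _ _ _ f⟩ := hf
  have coeff_linear (j i : Fin 3) : coeff (.single i 1) (f j) = 0 := by
    by_contra hne
    simpa using (hdeg j _ (mem_support_iff.mpr hne)).1
  obtain ⟨hf₁, S, hS, hf₀, hf₂⟩ := hCR.exists_skewAdjoint_of_coeff_eq_zero hk (coeff_linear 0 0)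
  have skew := conj_apply_of_mem_skewAdjoint hS
  have S₀₀ : I * (S 0 0).im = S 0 0 := by
    have re_eq_zero := congrArg re (skew 0 0)
    rw [conj_re, neg_re, self_eq_neg] at re_eq_zero
    exact Complex.ext (by simp [re_eq_zero]) (by simp)
  have S₂₂ : S 2 2 = 0 := by
    simpa [hf₂, coeff_X_pow, Finsupp.single_eq_single_iff] using coeff_linear 2 2
  refine ⟨((S 0 0).im, conj (S 2 0)), ?_⟩
  ext1 j
  fin_cases j
  · simp [rigidField, S₀₀, skew, hf₀]
  · simp [rigidField, hf₁]
  · simp [rigidField, hf₂, S₂₂]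

theorem span_gcSet_eq_range_rigidField {d : ℕ} (hm : 1 ≤ m) (hk : 2 ≤ k) (hd : m + k ≤ d) :
    Submodule.span ℝ (gcSet (X 0) (X 1 ^ (m + k)) (X 1 ^ m * X 2) d) =
      LinearMap.range (rigidField m k) := by
  refine le_antisymm (Submodule.span_le.mpr fun f hf => exists_rigidField_eq hk hf) ?_
  rintro _ ⟨v, rfl⟩
  exact Submodule.subset_span (rigidField_mem_gcSet hm hk hd v)

end MonomialModel

theorem stmt17_general (m k d : ℕ) (hm : 1 ≤ m) (hk : 2 ≤ k) (hd : m + k ≤ d) :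
    (∀ a : ℝ,
      IsInfCR (X 0) (X 1 ^ (m + k)) (X 1 ^ m * X 2)
        ![C (I * (a : ℂ)) * X 1 ^ (m + k), 0, 0] 0) ∧
    (∀ a b : ℝ,
      IsInfCR (X 0) (X 1 ^ (m + k)) (X 1 ^ m * X 2)
        ![C (-((a : ℂ) + (b : ℂ) * I)) * X 1 ^ m * X 2, 0,
          C ((a : ℂ) - (b : ℂ) * I) * X 1 ^ k] 0) ∧
    Module.rank ℝ ↥(Submodule.span ℝ
      (gcSet (X 0) (X 1 ^ (m + k)) (X 1 ^ m * X 2) d)) = 3 := by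
  refine ⟨fun a => ?_, fun a b => ?_, ?_⟩
  · convert isInfCR_rename_castSucc_iff.mpr (isRigidInfCR_rigidField (m := m) (k := k) (a, 0))
      using 1
    ext1 j
    fin_cases j <;> simp [rigidField, smul_eq_C_mul]
  · convert isInfCR_rename_castSucc_iff.mpr
      (isRigidInfCR_rigidField (m := m) (k := k) (0, a + b * I)) using 1
    ext1 j
    fin_cases j <;> simp [rigidField, smul_eq_C_mul, mul_assoc, sub_eq_add_neg]
    ring
  · rw [span_gcSet_eq_range_rigidField hm hk hd, rank_range_of_injective _ rigidField_injective,
      rank_prod', Module.rank_self, rank_real_complex]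
    norm_num

/-- For `ℓ = 2m+1 ≥ 3` odd, `P = z₁`, `Q = z₂^ℓ`,
`R = z₂^{(ℓ-1)/2} z₃` (so `d = ℓ + 1`): (1) `i a z₂^ℓ ∂/∂z₁` is an infinitesimal CR
automorphism for all real `a`; (2) `-(a+ib) z₂^{(ℓ-1)/2} z₃ ∂/∂z₁ + (a-ib) z₂^{(ℓ+1)/2} ∂/∂z₃`
is an infinitesimal CR automorphism for all real `a, b`; (3) `dim_ℝ g_c = 3`. -/
theorem stmt17 (m : ℕ) (hm : 1 ≤ m) :
    (∀ a : ℝ,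
      IsInfCR (X 0) (X 1 ^ (2 * m + 1)) (X 1 ^ m * X 2)
        ![C (Complex.I * (a : ℂ)) * X 1 ^ (2 * m + 1), 0, 0] 0) ∧
    (∀ a b : ℝ,
      IsInfCR (X 0) (X 1 ^ (2 * m + 1)) (X 1 ^ m * X 2)
        ![C (-(((a : ℂ)) + (b : ℂ) * Complex.I)) * X 1 ^ m * X 2, 0,
          C ((a : ℂ) - (b : ℂ) * Complex.I) * X 1 ^ (m + 1)] 0) ∧
    Module.rank ℝ ↥(Submodule.span ℝ
      (gcSet (X 0) (X 1 ^ (2 * m + 1)) (X 1 ^ m * X 2) (2 * m + 2))) = 3 := by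
  rw [show 2 * m + 1 = m + (m + 1) by omega]
  exact stmt17_general m (m + 1) (2 * m + 2) hm (by omega) (by omega)
end
end
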